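/- Let U be an open subset of ℝ³ that is star-shaped about one of its points. If F : U → ℝ³ is a smooth vector field with div F = 0 on U, then there exists a smooth vector field A : U → ℝ³ with curl A = F on U and div A = 0 on U. (Strong dual Poincaré lemma in three dimensions: every divergence-free field has a Coulomb-gauge vector potential.) -/

import Mathlib

/-!
Translate the centre of `U` to the origin. With `I(x) = ∫₀¹ t F(t x) dt`, the field `A₀ = I × x` is
a vector potential of `F`: expanding the curl gives `2 I + (x · ∇) I - (div I) x`, where `div I = 0`
because `div F = 0`, and `2 I + (x · ∇) I = F` by integrating `d/dt (t ^ 2 F(t x))`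
(`ray_euler`, `exists_vector_potential`). Adding a gradient `∇φ` does not change the curl, so
`A = A₀ + ∇φ` is in Coulomb gauge as soon as `Δ φ = - div A₀` on `U`.

It remains to solve `Δ φ = f` on a starlike open set for an arbitrary smooth `f`, with no control of
`f` at the boundary (`exists_lap3_eq`). For `g` smooth with compact support, the Newtonian potential
`‖·‖⁻¹ * g` is smooth with Laplacian `-4π g` (`lap3_nconv`). Exhaust `U` by compact sets `L n`
starlike about `0` and choose compactly supported `g n` equal to `f` near `L n`. The source
`g (n + 1) - g n` vanishes near `L n`. If its potential can be made small on `L n` with all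
derivatives up to order `n`, without changing `g (n + 1)` near `L (n + 1)`, then the telescoping sum
of potentials converges smoothly and solves the equation (Mittag-Leffler).

The smallness comes from a Runge-type argument. For `x` in a compact set `K` starlike about `0` and
`y ∉ K`, the points `t x`, `0 ≤ t ≤ 1`, avoid `y`, so `u ↦ ‖u x - y‖⁻¹` extends holomorphically to a
complex neighbourhood of `[0, 1]`, uniformly in `(x, y)`; it is a holomorphic curve in a Banach space
of continuous functions. By the identity theorem modulo that span, its value at `1`
lies in the closed span of its values at arbitrarily small `r > 0` (`analytic_mem_closure`,
`kernel_approx`). Since `‖r x - y‖⁻¹` has its pole at `r⁻¹ y`, a source off `K` can therefore be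
replaced by one supported far away with almost the same potential on `K` (`push_out`).
-/

/-- Partial derivative of `f` at `x` in direction `v`. -/
noncomputable def pd {E F : Type*} [NormedAddCommGroup E] [NormedSpace ℝ E]
    [NormedAddCommGroup F] [NormedSpace ℝ F] (f : E → F) (v : E) (x : E) : F :=
  fderiv ℝ f x v

/-- The `i`-th partial derivative of a function on `ℝ³`. -/
noncomputable def pd3 (f : EuclideanSpace ℝ (Fin 3) → ℝ) (i : Fin 3)
    (x : EuclideanSpace ℝ (Fin 3)) : ℝ :=
  pd f (EuclideanSpace.single i 1) x

/-- Divergence of a vector field on `ℝ³`: `div F = ∂₁F₁ + ∂₂F₂ + ∂₃F₃`. -/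
noncomputable def div3 (F : EuclideanSpace ℝ (Fin 3) → EuclideanSpace ℝ (Fin 3))
    (x : EuclideanSpace ℝ (Fin 3)) : ℝ :=
  ∑ i : Fin 3, pd3 (fun y => F y i) i x

/-- Curl of a vector field on `ℝ³`:
`curl F = (∂₂F₃ − ∂₃F₂, ∂₃F₁ − ∂₁F₃, ∂₁F₂ − ∂₂F₁)`. -/
noncomputable def curl3 (F : EuclideanSpace ℝ (Fin 3) → EuclideanSpace ℝ (Fin 3))
    (x : EuclideanSpace ℝ (Fin 3)) : Fin 3 → ℝ :=
  ![pd3 (fun y => F y 2) 1 x - pd3 (fun y => F y 1) 2 x,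
    pd3 (fun y => F y 0) 2 x - pd3 (fun y => F y 2) 0 x,
    pd3 (fun y => F y 1) 0 x - pd3 (fun y => F y 0) 1 x]

/-- Gradient of a scalar field on `ℝ³`: `∇φ = (∂₁φ, ∂₂φ, ∂₃φ)`. -/
noncomputable def grad3 (φ : EuclideanSpace ℝ (Fin 3) → ℝ)
    (x : EuclideanSpace ℝ (Fin 3)) : Fin 3 → ℝ :=
  fun i => pd3 φ i x

open MeasureTheory Set Filter Topology
open scoped ContDiff

/-! ### Convolution with a locally integrable kernel -/

/-- Euclidean three-space. -/
abbrev E3 := EuclideanSpace ℝ (Fin 3)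

/-- The convolution `k * g` of a scalar kernel `k` with a vector-valued function `g`. -/
noncomputable def kconv {G : Type} [NormedAddCommGroup G] [NormedSpace ℝ G]
    (k : E3 → ℝ) (g : E3 → G) (x : E3) : G := ∫ y, k y • g (x - y)

section conv

variable {G : Type} [NormedAddCommGroup G] [NormedSpace ℝ G]

lemma kconv_eq_convolution (k : E3 → ℝ) (g : E3 → G) :
    kconv k g = convolution k g (ContinuousLinearMap.lsmul ℝ ℝ) volume := by
  ext x; simp [kconv, convolution]

lemma locInt_inv_norm : LocallyIntegrable (fun y : E3 => ‖y‖⁻¹) := by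
  refine locallyIntegrable_of_norm_le_rpow (C := 1) (α := 1) (by simp) (by simp)
    (Eventually.of_forall fun x => ?_) (Measurable.aestronglyMeasurable (by fun_prop))
  rw [Real.rpow_neg_one]
  simp

lemma integrable_kconv {k : E3 → ℝ} {g : E3 → G} (hk : LocallyIntegrable k)
    (hg : Continuous g) (hgs : HasCompactSupport g) (x : E3) :
    Integrable (fun y => k y • g (x - y)) := by
  have := hgs.convolutionExists_right (L := ContinuousLinearMap.lsmul ℝ ℝ) (μ := volume) hk hg x
  simpa [ConvolutionExistsAt] using this

lemma hasFDerivAt_kconv {k : E3 → ℝ} {g : E3 → G} (hk : LocallyIntegrable k)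
    (hg : ContDiff ℝ ∞ g) (hgs : HasCompactSupport g) (x : E3) :
    HasFDerivAt (kconv k g) (kconv k (fderiv ℝ g) x) x := by
  rw [kconv_eq_convolution]
  have h := hgs.hasFDerivAt_convolution_right (ContinuousLinearMap.lsmul ℝ ℝ) hk
    (hg.of_le (by norm_cast)) x
  have he : kconv k (fderiv ℝ g) x = convolution k (fderiv ℝ g)
      ((ContinuousLinearMap.lsmul ℝ ℝ).precompR E3) volume x := rfl
  rw [he]
  exact h

lemma contDiff_kconv {k : E3 → ℝ} {g : E3 → G} (hk : LocallyIntegrable k)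
    (hg : ContDiff ℝ ∞ g) (hgs : HasCompactSupport g) : ContDiff ℝ ∞ (kconv k g) := by
  rw [kconv_eq_convolution]
  exact hgs.contDiff_convolution_right _ hk hg

lemma fderiv_smooth {g : E3 → G} (hg : ContDiff ℝ ∞ g) : ContDiff ℝ ∞ (fderiv ℝ g) :=
  hg.fderiv_right (by simp)

lemma fderiv_kconv_apply [CompleteSpace G] {k : E3 → ℝ} {g : E3 → G} (hk : LocallyIntegrable k)
    (hg : ContDiff ℝ ∞ g) (hgs : HasCompactSupport g) (x v : E3) :
    fderiv ℝ (kconv k g) x v = kconv k (fun z => fderiv ℝ g z v) x := by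
  rw [(hasFDerivAt_kconv hk hg hgs x).fderiv, kconv, kconv, ContinuousLinearMap.integral_apply]
  · rfl
  · exact integrable_kconv hk (fderiv_smooth hg).continuous (hgs.fderiv (𝕜 := ℝ)) x

lemma kconv_swap (k : E3 → ℝ) (g : E3 → G) (x : E3) :
    kconv k g x = ∫ y, k (x - y) • g y := by
  rw [kconv, ← integral_sub_left_eq_self _ volume x]
  simp

/-- Dilating the Newtonian potential of `g` gives the Newtonian potential of a dilation of `g`. -/
lemma nconv_scale (g : E3 → G) {r : ℝ} (hr : 0 < r) (x : E3) :
    kconv (fun y => ‖y‖⁻¹) g (r • x) = kconv (fun y => ‖y‖⁻¹) (fun z => r ^ 2 • g (r • z)) x := by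
  have h := Measure.integral_comp_smul (volume : Measure E3)
    (fun y => ‖y‖⁻¹ • g (r • x - y)) r
  rw [kconv, kconv]
  have h3 : |(r ^ Module.finrank ℝ E3)⁻¹| = (r ^ 3)⁻¹ := by
    simp [abs_of_pos hr]
  rw [h3] at h
  have h4 : (fun y : E3 => ‖y‖⁻¹ • r ^ 2 • g (r • (x - y))) =
      fun y => r ^ 3 • (‖r • y‖⁻¹ • g (r • x - r • y)) := by
    ext y
    simp only [norm_smul, Real.norm_eq_abs, abs_of_pos hr, smul_sub, smul_smul]
    congr 1
    rcases eq_or_ne (‖y‖) 0 with h0 | h0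
    · simp [h0]
    · field_simp
  rw [h4, integral_smul, h, smul_smul, mul_inv_cancel₀ (by positivity), one_smul]

end conv

/-! ### The Newtonian potential and Poisson's equation -/

/-- The Laplacian on `ℝ³`, as the sum of the pure second partial derivatives. -/
noncomputable def lap3 (φ : E3 → ℝ) (x : E3) : ℝ := ∑ i : Fin 3, pd3 (pd3 φ i) i x

lemma pd3_smooth {g : E3 → ℝ} (hg : ContDiff ℝ ∞ g) (i : Fin 3) : ContDiff ℝ ∞ (pd3 g i) :=
  (fderiv_smooth hg).clm_apply contDiff_const

lemma pd3_compactSupport {g : E3 → ℝ} (hg : HasCompactSupport g) (i : Fin 3) :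
    HasCompactSupport (pd3 g i) :=
  hg.fderiv_apply (𝕜 := ℝ) _

lemma pd3_kconv {k g : E3 → ℝ} (hk : LocallyIntegrable k)
    (hg : ContDiff ℝ ∞ g) (hgs : HasCompactSupport g) (i : Fin 3) :
    pd3 (kconv k g) i = kconv k (pd3 g i) := by
  ext x
  exact fderiv_kconv_apply hk hg hgs x _

lemma lap3_kconv {k g : E3 → ℝ} (hk : LocallyIntegrable k)
    (hg : ContDiff ℝ ∞ g) (hgs : HasCompactSupport g) (x : E3) :
    lap3 (kconv k g) x = ∑ i : Fin 3, kconv k (pd3 (pd3 g i) i) x := by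
  unfold lap3
  refine Finset.sum_congr rfl fun i _ => ?_
  rw [pd3_kconv hk hg hgs, pd3_kconv hk (pd3_smooth hg i) (pd3_compactSupport hgs i)]

/-- Integration by parts: a derivative can be moved from one factor of a convolution to the
other. -/
lemma kconv_pd3_swap {k h : E3 → ℝ} (hk : ContDiff ℝ ∞ k)
    (hh : ContDiff ℝ ∞ h) (hhs : HasCompactSupport h) (i : Fin 3) (x : E3) :
    kconv k (pd3 h i) x = kconv (pd3 k i) h x := by
  have hd : ∀ y v, fderiv ℝ (fun y => h (x - y)) y v = - fderiv ℝ h (x - y) v := by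
    intro y v
    have h1 : HasFDerivAt h (fderiv ℝ h (x - y)) (x - y) :=
      (hh.differentiable (by simp) _).hasFDerivAt
    have h2 : HasFDerivAt (fun y => x - y) (-(ContinuousLinearMap.id ℝ E3)) y :=
      (hasFDerivAt_id y).const_sub x
    have h3 : HasFDerivAt (fun y => h (x - y)) _ y := h1.comp y h2
    rw [h3.fderiv]
    simp
  have hkl : LocallyIntegrable k := hk.continuous.locallyIntegrable
  have hkl' : LocallyIntegrable (pd3 k i) := (pd3_smooth hk i).continuous.locallyIntegrable
  have := integral_mul_fderiv_eq_neg_fderiv_mul_of_integrable (μ := (volume : Measure E3))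
    (f := k) (g := fun y => h (x - y)) (v := EuclideanSpace.single i 1)
    (integrable_kconv hkl' hh.continuous hhs x)
    (by
      simp only [hd, mul_neg]
      exact (integrable_kconv hkl (pd3_smooth hh i).continuous (pd3_compactSupport hhs i) x).neg)
    (integrable_kconv hkl hh.continuous hhs x)
    (fun y _ => hk.differentiable (by simp) y)
    (fun y _ => (hh.comp (contDiff_const.sub contDiff_id)).differentiable (by simp) y)
  simp only [hd, mul_neg, integral_neg, neg_inj] at this
  exact this

lemma hasFDerivAt_reg {a : ℝ} (ha : 0 < a) (p : ℝ) (y : E3) :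
    HasFDerivAt (fun y : E3 => (‖y‖ ^ 2 + a) ^ p)
      ((p * (‖y‖ ^ 2 + a) ^ (p - 1)) • ((2 : ℝ) • innerSL ℝ y)) y := by
  have h1 : HasFDerivAt (fun y : E3 => ‖y‖ ^ 2 + a) ((2 : ℝ) • innerSL ℝ y) y := by
    have := ((hasStrictFDerivAt_norm_sq y).hasFDerivAt).add_const a
    simpa [two_smul] using this
  exact h1.rpow_const (Or.inl (by positivity))

lemma contDiff_reg {a : ℝ} (ha : 0 < a) (p : ℝ) : ContDiff ℝ ∞ (fun y : E3 => (‖y‖ ^ 2 + a) ^ p) := by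
  apply ContDiff.rpow_const_of_ne
  · exact (contDiff_norm_sq ℝ).add contDiff_const
  · intro x; positivity

lemma pd3_reg {a : ℝ} (ha : 0 < a) (p : ℝ) (i : Fin 3) :
    pd3 (fun y : E3 => (‖y‖ ^ 2 + a) ^ p) i =
      fun y => 2 * p * (y i * (‖y‖ ^ 2 + a) ^ (p - 1)) := by
  ext y
  rw [pd3, pd, (hasFDerivAt_reg ha p y).fderiv]
  simp [EuclideanSpace.inner_single_right]
  ring

lemma pd3_pd3_reg {a : ℝ} (ha : 0 < a) (p : ℝ) (i : Fin 3) (y : E3) :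
    pd3 (pd3 (fun y : E3 => (‖y‖ ^ 2 + a) ^ p) i) i y =
      2 * p * ((‖y‖ ^ 2 + a) ^ (p - 1) +
        2 * (p - 1) * (y i) ^ 2 * (‖y‖ ^ 2 + a) ^ (p - 2)) := by
  rw [pd3_reg ha]
  have h1 : HasFDerivAt (fun y : E3 => y i) (EuclideanSpace.proj i : E3 →L[ℝ] ℝ) y :=
    (EuclideanSpace.proj i : E3 →L[ℝ] ℝ).hasFDerivAt
  have h2 : HasFDerivAt (fun y : E3 => 2 * p * (y i * (‖y‖ ^ 2 + a) ^ (p - 1))) _ y :=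
    (h1.mul (hasFDerivAt_reg ha (p - 1) y)).const_mul (2 * p)
  rw [pd3, pd, h2.fderiv]
  simp [EuclideanSpace.inner_single_right]
  rw [show p - 1 - 1 = p - 2 by ring]
  ring

/-- The Laplacian of the regularised kernel `(‖y‖² + a)^(-1/2)`; as `a → 0` it is, up to the factor
`-c0`, an approximate identity. -/
lemma lap3_reg {a : ℝ} (ha : 0 < a) (y : E3) :
    lap3 (fun y : E3 => (‖y‖ ^ 2 + a) ^ (-(1 / 2) : ℝ)) y =
      -(3 * a * (‖y‖ ^ 2 + a) ^ (-(5 / 2) : ℝ)) := by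
  unfold lap3
  simp only [pd3_pd3_reg ha]
  have hq : 0 < ‖y‖ ^ 2 + a := by positivity
  have h3 : (‖y‖ ^ 2 + a) ^ (-(1 / 2) - 1 : ℝ) =
      (‖y‖ ^ 2 + a) * (‖y‖ ^ 2 + a) ^ (-(5 / 2) : ℝ) := by
    rw [← Real.rpow_one_add' hq.le (by norm_num)]
    norm_num
  rw [h3, show (-(1 / 2) - 2 : ℝ) = -(5 / 2) by norm_num]
  have hn : ‖y‖ ^ 2 = y 0 ^ 2 + y 1 ^ 2 + y 2 ^ 2 := by
    rw [EuclideanSpace.norm_sq_eq]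
    simp [Fin.sum_univ_three]
  simp only [Fin.sum_univ_three]
  generalize (‖y‖ ^ 2 + a) ^ (-(5 / 2) : ℝ) = w
  rw [hn]
  ring

/-- The normalising constant of the Newtonian kernel (equal to `4π`). -/
noncomputable def c0 : ℝ := ∫ z : E3, 3 * (‖z‖ ^ 2 + 1) ^ (-(5 / 2) : ℝ)

lemma integrable_c0 : Integrable (fun z : E3 => 3 * (‖z‖ ^ 2 + 1) ^ (-(5 / 2) : ℝ)) := by
  have := (integrable_rpow_neg_one_add_norm_sq (E := E3) (μ := volume) (r := 5)
    (by simp; norm_num)).const_mul 3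
  simpa [add_comm, neg_div] using this

lemma c0_pos : 0 < c0 := by
  unfold c0
  rw [integral_pos_iff_support_of_nonneg (fun z => by positivity) integrable_c0]
  have : Function.support (fun z : E3 => 3 * (‖z‖ ^ 2 + 1) ^ (-(5 / 2) : ℝ)) = univ := by
    ext z; simp only [Function.mem_support, mem_univ, iff_true]; positivity
  rw [this]
  simp

/-- Rescaling `y = ε z` in the convolution with the Laplacian of the kernel regularised at scale
`ε`. -/
lemma kconv_lap_reg {g : E3 → ℝ} (x : E3) {ε : ℝ} (hε : 0 < ε) :
    ∫ y, (3 * ε ^ 2 * (‖y‖ ^ 2 + ε ^ 2) ^ (-(5 / 2) : ℝ)) * g (x - y) =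
      ∫ z : E3, 3 * (‖z‖ ^ 2 + 1) ^ (-(5 / 2) : ℝ) * g (x - ε • z) := by
  have h := Measure.integral_comp_smul (volume : Measure E3)
    (fun y => (3 * ε ^ 2 * (‖y‖ ^ 2 + ε ^ 2) ^ (-(5 / 2) : ℝ)) * g (x - y)) ε
  have h3 : |(ε ^ Module.finrank ℝ E3)⁻¹| = (ε ^ 3)⁻¹ := by
    simp [abs_of_pos hε]
  rw [h3] at h
  have h4 : ∀ z : E3, 3 * (‖z‖ ^ 2 + 1) ^ (-(5 / 2) : ℝ) * g (x - ε • z) =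
      ε ^ 3 * ((3 * ε ^ 2 * (‖ε • z‖ ^ 2 + ε ^ 2) ^ (-(5 / 2) : ℝ)) * g (x - ε • z)) := by
    intro z
    have : ‖ε • z‖ ^ 2 + ε ^ 2 = ε ^ 2 * (‖z‖ ^ 2 + 1) := by
      rw [norm_smul, Real.norm_eq_abs, mul_pow, sq_abs]; ring
    rw [this, Real.mul_rpow (by positivity) (by positivity), ← Real.rpow_natCast ε 2,
      ← Real.rpow_mul hε.le]
    have h5 : ε ^ 3 * (ε ^ 2 * ε ^ (((2 : ℕ) : ℝ) * -(5 / 2))) = 1 := by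
      rw [show (((2 : ℕ) : ℝ) * -(5 / 2)) = -((5 : ℕ) : ℝ) by norm_num, Real.rpow_neg hε.le,
        Real.rpow_natCast]
      field_simp
    simp only [Real.rpow_natCast]
    linear_combination (- 3 * (‖z‖ ^ 2 + 1) ^ (-(5 / 2) : ℝ) * g (x - ε • z)) * h5
  simp only [h4]
  rw [integral_const_mul, h, smul_eq_mul, ← mul_assoc, mul_inv_cancel₀ (by positivity), one_mul]

/-- **Poisson's equation**: `‖·‖⁻¹ / (-c0)` is a fundamental solution of the Laplacian.
The Laplacian is moved onto the kernel regularised by `u n ^ 2`, and `u n → 0`. -/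
lemma lap3_nconv {g : E3 → ℝ} (hg : ContDiff ℝ ∞ g) (hgs : HasCompactSupport g) (x : E3) :
    lap3 (kconv (fun y => ‖y‖⁻¹) g) x = - c0 * g x := by
  rw [lap3_kconv locInt_inv_norm hg hgs]
  set u : ℕ → ℝ := fun n => 1 / ((n : ℝ) + 1) with hu
  have hupos : ∀ n, 0 < u n := fun n => by positivity
  have hu0 : Tendsto u atTop (𝓝 0) := tendsto_one_div_add_atTop_nhds_zero_nat
  set K : ℕ → E3 → ℝ := fun n y => (‖y‖ ^ 2 + u n ^ 2) ^ (-(1 / 2) : ℝ) with hK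
  have hKs : ∀ n, ContDiff ℝ ∞ (K n) := fun n => contDiff_reg (by have := hupos n; positivity) _
  have key : ∀ h : E3 → ℝ, Continuous h → HasCompactSupport h →
      Tendsto (fun n => kconv (K n) h x) atTop (𝓝 (kconv (fun y => ‖y‖⁻¹) h x)) := by
    intro h hh hhs
    refine tendsto_integral_of_dominated_convergence (fun y => ‖‖y‖⁻¹ • h (x - y)‖) ?_ ?_ ?_ ?_
    · intro n
      exact (integrable_kconv (hKs n).continuous.locallyIntegrable hh hhs x).1
    · exact (integrable_kconv locInt_inv_norm hh hhs x).norm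
    · intro n
      have : ∀ᵐ y : E3, y ≠ 0 := by
        simp [ae_iff]
      filter_upwards [this] with y hy
      rw [norm_smul, norm_smul]
      gcongr
      have hy' : 0 < ‖y‖ := norm_pos_iff.2 hy
      rw [Real.norm_of_nonneg (by positivity), Real.norm_of_nonneg (by positivity)]
      have : ‖y‖⁻¹ = (‖y‖ ^ 2) ^ (-(1 / 2) : ℝ) := by
        rw [← Real.rpow_natCast, ← Real.rpow_mul hy'.le, ← Real.rpow_neg_one]; norm_num
      rw [this]
      exact Real.rpow_le_rpow_of_nonpos (by positivity) (by have := hupos n; nlinarith)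
        (by norm_num)
    · have : ∀ᵐ y : E3, y ≠ 0 := by
        simp [ae_iff]
      filter_upwards [this] with y hy
      have hy' : 0 < ‖y‖ := norm_pos_iff.2 hy
      have h1 : ‖y‖⁻¹ = (‖y‖ ^ 2 + 0 ^ 2) ^ (-(1 / 2) : ℝ) := by
        rw [zero_pow two_ne_zero, add_zero, ← Real.rpow_natCast, ← Real.rpow_mul hy'.le,
          ← Real.rpow_neg_one]; norm_num
      rw [h1]
      refine Tendsto.smul ?_ tendsto_const_nhds
      refine Tendsto.rpow_const ?_ (Or.inl (by positivity))
      exact tendsto_const_nhds.add (hu0.pow 2)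
  have lim1 := tendsto_finsetSum (Finset.univ : Finset (Fin 3)) fun i _ =>
    key (pd3 (pd3 g i) i) (pd3_smooth (pd3_smooth hg i) i).continuous
      (pd3_compactSupport (pd3_compactSupport hgs i) i)
  have e1 : ∀ n, ∑ i : Fin 3, kconv (K n) (pd3 (pd3 g i) i) x =
      ∫ z : E3, -(3 * (‖z‖ ^ 2 + 1) ^ (-(5 / 2) : ℝ) * g (x - u n • z)) := by
    intro n
    have hp := hupos n
    rw [integral_neg, ← kconv_lap_reg x hp]
    have : ∀ i, kconv (K n) (pd3 (pd3 g i) i) x = kconv (pd3 (pd3 (K n) i) i) g x := by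
      intro i
      rw [kconv_pd3_swap (hKs n) (pd3_smooth hg i) (pd3_compactSupport hgs i),
        kconv_pd3_swap (pd3_smooth (hKs n) i) hg hgs]
    simp only [this]
    unfold kconv
    rw [← integral_finsetSum, ← integral_neg]
    · congr 1
      ext y
      have := lap3_reg (a := u n ^ 2) (by positivity) y
      unfold lap3 at this
      simp only [smul_eq_mul]
      rw [← Finset.sum_mul, this]
      ring
    · intro i _
      exact integrable_kconv (pd3_smooth (pd3_smooth (hKs n) i) i).continuous.locallyIntegrable
        hg.continuous hgs x
  simp only [e1] at lim1
  -- after rescaling, the regularisation parameter only appears inside the continuous function `g`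
  have lim2 : Tendsto (fun n => ∫ z : E3, -(3 * (‖z‖ ^ 2 + 1) ^ (-(5 / 2) : ℝ) * g (x - u n • z)))
      atTop (𝓝 (∫ z : E3, -(3 * (‖z‖ ^ 2 + 1) ^ (-(5 / 2) : ℝ) * g x))) := by
    obtain ⟨C, hC⟩ := hgs.exists_bound_of_continuous hg.continuous
    refine tendsto_integral_of_dominated_convergence
      (fun z : E3 => 3 * (‖z‖ ^ 2 + 1) ^ (-(5 / 2) : ℝ) * C) ?_ ?_ ?_ ?_
    · intro n
      refine (integrable_c0.1.mul ?_).neg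
      exact (hg.continuous.comp (by fun_prop)).aestronglyMeasurable
    · exact integrable_c0.mul_const C
    · intro n
      refine Eventually.of_forall fun z => ?_
      rw [norm_neg, norm_mul, Real.norm_of_nonneg (by positivity)]
      gcongr
      exact hC _
    · refine Eventually.of_forall fun z => ?_
      refine (Tendsto.const_mul _ ?_).neg
      have : Continuous fun s : ℝ => g (x - s • z) := hg.continuous.comp (by fun_prop)
      have := (this.tendsto 0).comp hu0
      simpa [Function.comp_def] using this
  rw [tendsto_nhds_unique lim1 lim2, integral_neg, integral_mul_const, c0]
  ring

/-! ### Runge approximation of the Newtonian kernel -/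

/-- A family of holomorphic functions depending continuously on a compact parameter is a
holomorphic map into the Banach space of continuous functions of the parameter. -/
lemma differentiableOn_mkD {X : Type} [TopologicalSpace X] [CompactSpace X] {k k' : ℂ → X → ℂ}
    {O : Set ℂ} (hO : IsOpen O)
    (hk : ∀ u ∈ O, ∀ x, ContinuousAt (fun p : ℂ × X => k p.1 p.2) (u, x))
    (hk' : ∀ u ∈ O, ∀ x, ContinuousAt (fun p : ℂ × X => k' p.1 p.2) (u, x))
    (hd : ∀ u ∈ O, ∀ x, HasDerivAt (fun v => k v x) (k' u x) u) :
    DifferentiableOn ℂ (fun u => ContinuousMap.mkD (k u) (0 : C(X, ℂ))) O := by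
  have hc : ∀ u ∈ O, Continuous (k u) := fun u hu => continuous_iff_continuousAt.2 fun x =>
    (hk u hu x).comp (f := fun x => (u, x)) (by fun_prop)
  have hc' : ∀ u ∈ O, Continuous (k' u) := fun u hu => continuous_iff_continuousAt.2 fun x =>
    (hk' u hu x).comp (f := fun x => (u, x)) (by fun_prop)
  intro u₀ hu₀
  refine HasFDerivWithinAt.differentiableWithinAt
    (HasDerivAt.hasFDerivAt (f' := ContinuousMap.mkD (k' u₀) 0) ?_).hasFDerivWithinAt
  rw [hasDerivAt_iff_isLittleO, Asymptotics.isLittleO_iff]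
  intro ε hε
  have h1 : ∀ᶠ u in 𝓝 u₀, ∀ x ∈ (univ : Set X), ‖k' u x - k' u₀ x‖ ≤ ε := by
    refine IsCompact.eventually_forall_of_forall_eventually (P := fun u x => ‖k' u x - k' u₀ x‖ ≤ ε)
      isCompact_univ fun x _ => ?_
    have h2 : ContinuousAt (fun p : ℂ × X => ‖k' p.1 p.2 - k' u₀ p.2‖) (u₀, x) :=
      ((hk' u₀ hu₀ x).sub ((hc' u₀ hu₀).comp continuous_snd).continuousAt).norm
    have h3 : ‖k' u₀ x - k' u₀ x‖ < ε := by simpa using hε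
    exact (h2.eventually (gt_mem_nhds h3)).mono fun z hz => hz.le
  obtain ⟨δ, hδ, hb⟩ := Metric.eventually_nhds_iff_ball.1 (h1.and (hO.mem_nhds hu₀))
  filter_upwards [Metric.ball_mem_nhds u₀ hδ] with u hu
  rw [ContinuousMap.norm_le _ (by positivity)]
  intro x
  have h4 := (convex_ball u₀ δ).norm_image_sub_le_of_norm_hasDerivWithin_le
    (f := fun v => k v x - v * k' u₀ x) (f' := fun v => k' v x - 1 * k' u₀ x) (C := ε)
    (fun v hv => ((hd v (hb v hv).2 x).sub ((hasDerivAt_id v).mul_const _)).hasDerivWithinAt)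
    (fun v hv => by simpa using (hb v hv).1 x (mem_univ _)) (Metric.mem_ball_self hδ) hu
  simp only [ContinuousMap.sub_apply, ContinuousMap.smul_apply, smul_eq_mul,
    ContinuousMap.mkD_apply_of_continuous (hc u (hb u hu).2),
    ContinuousMap.mkD_apply_of_continuous (hc u₀ hu₀),
    ContinuousMap.mkD_apply_of_continuous (hc' u₀ hu₀)]
  have h5 : k u x - k u₀ x - (u - u₀) * k' u₀ x
      = k u x - u * k' u₀ x - (k u₀ x - u₀ * k' u₀ x) := by ring
  rw [h5]
  exact h4

/-- The endpoint of an analytic curve in a Banach space lies in the closed span of any initial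
piece of the curve. -/
lemma analytic_mem_closure {E : Type} [NormedAddCommGroup E] [NormedSpace ℂ E]
    {G : ℂ → E} (hG : AnalyticOnNhd ℂ G (Complex.ofReal '' Icc 0 1)) {ρ : ℝ} (hρ : 0 < ρ) :
    G 1 ∈ closure (Submodule.span ℂ ((fun r : ℝ => G r) '' Ioo 0 ρ) : Set E) := by
  set M := Submodule.span ℂ ((fun r : ℝ => G r) '' Ioo 0 ρ) with hM
  have hcl : IsClosed (M.topologicalClosure : Set E) := M.isClosed_topologicalClosure
  have hA : AnalyticOnNhd ℂ (fun u => M.topologicalClosure.mkQL (G u))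
      (Complex.ofReal '' Icc 0 1) := M.topologicalClosure.mkQL.comp_analyticOnNhd hG
  have hz : ∀ r ∈ Ioo 0 ρ, M.topologicalClosure.mkQL (G (r : ℝ)) = 0 := by
    intro r hr
    have : G r ∈ M.topologicalClosure :=
      M.le_topologicalClosure (Submodule.subset_span ⟨r, hr, rfl⟩)
    simpa using this
  have hfr : ∃ᶠ z in 𝓝[≠] (0 : ℂ), M.topologicalClosure.mkQL (G z) = 0 := by
    have ht : Tendsto (fun r : ℝ => (r : ℂ)) (𝓝[>] 0) (𝓝[≠] 0) := by
      refine tendsto_nhdsWithin_iff.2 ⟨?_, ?_⟩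
      · have : Tendsto (fun r : ℝ => (r : ℂ)) (𝓝 0) (𝓝 ((0 : ℝ) : ℂ)) :=
          Complex.continuous_ofReal.continuousAt
        exact (by simpa using this : Tendsto (fun r : ℝ => (r : ℂ)) (𝓝 0) (𝓝 0)).mono_left
          nhdsWithin_le_nhds
      · filter_upwards [self_mem_nhdsWithin] with r hr
        simpa using (ne_of_gt hr)
    refine ht.frequently (Eventually.frequently ?_)
    filter_upwards [Ioo_mem_nhdsGT hρ] with r hr using hz r hr
  have hp : IsPreconnected (Complex.ofReal '' Icc (0 : ℝ) 1) :=
    isPreconnected_Icc.image _ Complex.continuous_ofReal.continuousOn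
  have h1 := hA.eqOn_zero_of_preconnected_of_frequently_eq_zero hp
    (z₀ := 0) ⟨0, by simp, by simp⟩ hfr (x := 1) ⟨1, by simp, by simp⟩
  have h2 : G 1 ∈ M.topologicalClosure := by simpa using h1
  exact h2

/-- The complexified squared distance `‖u • x - y‖ ^ 2`. -/
noncomputable def qd (u : ℂ) (p : E3 × E3) : ℂ :=
  u ^ 2 * ((‖p.1‖ ^ 2 : ℝ) : ℂ) - 2 * u * ((inner ℝ p.1 p.2 : ℝ) : ℂ) + ((‖p.2‖ ^ 2 : ℝ) : ℂ)

lemma qd_real (r : ℝ) (p : E3 × E3) : qd r p = ((‖r • p.1 - p.2‖ ^ 2 : ℝ) : ℂ) := by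
  rw [norm_sub_sq_real, norm_smul, inner_smul_left, qd, mul_pow]
  simp
  ring

lemma qd_cpow (r : ℝ) (p : E3 × E3) (h : r • p.1 ≠ p.2) :
    qd r p ^ (-(1 / 2) : ℂ) = ((‖r • p.1 - p.2‖⁻¹ : ℝ) : ℂ) := by
  have h0 : 0 < ‖r • p.1 - p.2‖ := norm_pos_iff.2 (sub_ne_zero.2 h)
  have h1 : ‖r • p.1 - p.2‖⁻¹ = (‖r • p.1 - p.2‖ ^ 2) ^ (-(1 / 2) : ℝ) := by
    rw [← Real.rpow_natCast, ← Real.rpow_mul h0.le, ← Real.rpow_neg_one]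
    norm_num
  rw [qd_real, h1, Complex.ofReal_cpow (by positivity)]
  norm_num

lemma continuous_qd : Continuous (fun z : ℂ × E3 × E3 => qd z.1 z.2) := by
  unfold qd
  have h1 : Continuous (fun z : ℂ × E3 × E3 => inner ℝ z.2.1 z.2.2) := by fun_prop
  fun_prop

lemma hasDerivAt_qd (u : ℂ) (p : E3 × E3) : HasDerivAt (fun v => qd v p)
    (2 * u * ((‖p.1‖ ^ 2 : ℝ) : ℂ) - 2 * ((inner ℝ p.1 p.2 : ℝ) : ℂ)) u := by
  unfold qd
  have h1 := ((hasDerivAt_id u).pow 2).mul_const (((‖p.1‖ ^ 2 : ℝ) : ℂ))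
  have h2 := ((hasDerivAt_id u).const_mul 2).mul_const ((inner ℝ p.1 p.2 : ℝ) : ℂ)
  have h3 := (h1.sub h2).add_const (((‖p.2‖ ^ 2 : ℝ) : ℂ))
  refine h3.congr_deriv ?_
  simp

/-- Runge-type approximation: on a compact set `K` starlike about `0`, the kernel `‖x - y‖⁻¹` with
pole `y ∉ K` is approximated by combinations of the kernels `‖r • x - y‖⁻¹` with small `r > 0`, whose
poles `r⁻¹ • y` are far away. The same coefficients serve for all weights `r ^ j`, `j ≤ n`; such a
weight is what `j` derivatives of a dilated potential `x ↦ φ (r • x)` produce. -/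
lemma kernel_approx {K S : Set E3} (hK : IsCompact K) (hS : IsCompact S)
    (hst : ∀ x ∈ K, ∀ t ∈ Icc (0 : ℝ) 1, t • x ∈ K) (hd : Disjoint K S) {ρ : ℝ} (hρ : 0 < ρ)
    (hρ1 : ρ ≤ 1) (n : ℕ) {ε : ℝ} (hε : 0 < ε) :
    ∃ (T : Finset ℝ) (c : ℝ → ℝ), (∀ r ∈ T, 0 < r ∧ r < ρ) ∧
      ∀ j ≤ n, ∀ x ∈ K, ∀ y ∈ S,
        |‖x - y‖⁻¹ - ∑ r ∈ T, c r * r ^ j * ‖r • x - y‖⁻¹| ≤ ε := by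
  have hcX : CompactSpace ↥(K ×ˢ S) := isCompact_iff_compactSpace.1 (hK.prod hS)
  have hne : ∀ p : ↥(K ×ˢ S), ∀ t ∈ Icc (0 : ℝ) 1, t • p.1.1 ≠ p.1.2 := fun p t ht he =>
    hd.ne_of_mem (hst _ p.2.1 t ht) p.2.2 he
  -- an open neighbourhood of `[0, 1]` on which the kernel extends holomorphically
  set O : Set ℂ := {u | ∀ p : ↥(K ×ˢ S), qd u p ∈ Complex.slitPlane} with hOdef
  have hcq : ∀ z : ℂ × ↥(K ×ˢ S), ContinuousAt (fun z : ℂ × ↥(K ×ˢ S) => qd z.1 z.2) z := fun z => by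
    have : Continuous (fun z : ℂ × ↥(K ×ˢ S) => qd z.1 z.2) :=
      continuous_qd.comp (f := fun z : ℂ × ↥(K ×ˢ S) => (z.1, (z.2 : E3 × E3))) (by fun_prop)
    exact this.continuousAt
  have hO : IsOpen O := by
    refine isOpen_iff_mem_nhds.2 fun u hu => ?_
    have h1 : ∀ᶠ v in 𝓝 u, ∀ p ∈ (univ : Set ↥(K ×ˢ S)), qd v p ∈ Complex.slitPlane :=
      IsCompact.eventually_forall_of_forall_eventually
        (P := fun v (p : ↥(K ×ˢ S)) => qd v p ∈ Complex.slitPlane) isCompact_univ fun p _ =>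
        (hcq (u, p)).eventually (Complex.isOpen_slitPlane.mem_nhds (hu p))
    filter_upwards [h1] with v hv p using hv p (mem_univ _)
  have hseg : Complex.ofReal '' Icc (0 : ℝ) 1 ⊆ O := by
    rintro _ ⟨t, ht, rfl⟩ p
    rw [qd_real, Complex.ofReal_mem_slitPlane]
    have := norm_pos_iff.2 (sub_ne_zero.2 (hne p t ht))
    positivity
  let k : ℕ → ℂ → ↥(K ×ˢ S) → ℂ := fun j u p => u ^ j * qd u p ^ (-(1 / 2) : ℂ)
  let k' : ℕ → ℂ → ↥(K ×ˢ S) → ℂ := fun j u p => (j * u ^ (j - 1)) * qd u p ^ (-(1 / 2) : ℂ) +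
    u ^ j * ((-(1 / 2) : ℂ) * qd u p ^ (-(1 / 2) - 1 : ℂ) *
      (2 * u * ((‖p.1.1‖ ^ 2 : ℝ) : ℂ) - 2 * ((inner ℝ p.1.1 p.1.2 : ℝ) : ℂ)))
  have hpow : ∀ (s : ℂ), ∀ u ∈ O, ∀ x : ↥(K ×ˢ S),
      ContinuousAt (fun z : ℂ × ↥(K ×ˢ S) => qd z.1 z.2 ^ s) (u, x) := fun s u hu x =>
    (hcq (u, x)).cpow continuousAt_const (hu x)
  have hkc : ∀ j, ∀ u ∈ O, ∀ x, ContinuousAt (fun p : ℂ × ↥(K ×ˢ S) => k j p.1 p.2) (u, x) :=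
    fun j u hu x => (by fun_prop : ContinuousAt (fun p : ℂ × ↥(K ×ˢ S) => p.1 ^ j) (u, x)).mul
      (hpow _ u hu x)
  have hkc' : ∀ j, ∀ u ∈ O, ∀ x, ContinuousAt (fun p : ℂ × ↥(K ×ˢ S) => k' j p.1 p.2) (u, x) := by
    intro j u hu x
    have h1 : ContinuousAt (fun p : ℂ × ↥(K ×ˢ S) => (j : ℂ) * p.1 ^ (j - 1)) (u, x) := by fun_prop
    have h2 : ContinuousAt (fun p : ℂ × ↥(K ×ˢ S) => p.1 ^ j) (u, x) := by fun_prop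
    have h3 : ContinuousAt (fun p : ℂ × ↥(K ×ˢ S) => 2 * p.1 * ((‖p.2.1.1‖ ^ 2 : ℝ) : ℂ) -
        2 * ((inner ℝ p.2.1.1 p.2.1.2 : ℝ) : ℂ)) (u, x) := by
      have h4 : Continuous (fun z : ℂ × ↥(K ×ˢ S) => inner ℝ z.2.1.1 z.2.1.2) := by fun_prop
      have h5 : Continuous (fun p : ℂ × ↥(K ×ˢ S) => 2 * p.1 * ((‖p.2.1.1‖ ^ 2 : ℝ) : ℂ) -
        2 * ((inner ℝ p.2.1.1 p.2.1.2 : ℝ) : ℂ)) := by fun_prop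
      exact h5.continuousAt
    exact (h1.mul (hpow _ u hu x)).add (h2.mul ((continuousAt_const.mul (hpow _ u hu x)).mul h3))
  have hder : ∀ j, ∀ u ∈ O, ∀ x, HasDerivAt (fun v => k j v x) (k' j u x) u := by
    intro j u hu x
    exact (hasDerivAt_pow j u).mul ((hasDerivAt_qd u x).cpow_const (hu x))
  -- all the weights are treated at once, as one curve in a finite product
  let G : ℂ → (Fin (n + 1) → C(↥(K ×ˢ S), ℂ)) := fun u j => ContinuousMap.mkD (k j u) 0
  have hG : AnalyticOnNhd ℂ G (Complex.ofReal '' Icc 0 1) := by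
    have h1 : DifferentiableOn ℂ G O := differentiableOn_pi.2 fun j =>
      differentiableOn_mkD hO (hkc j) (hkc' j) (hder j)
    exact (h1.analyticOnNhd hO).mono hseg
  obtain ⟨m, hm, hdist⟩ := Metric.mem_closure_iff.1 (analytic_mem_closure hG hρ) ε hε
  obtain ⟨l, hl, rfl⟩ := (Finsupp.mem_span_image_iff_linearCombination ℂ).1 hm
  refine ⟨l.support, fun r => (l r).re, fun r hr => hl hr, fun j hj x hx y hy => ?_⟩
  have hcont : ∀ u ∈ O, Continuous (k j u) := fun u hu => continuous_iff_continuousAt.2 fun x =>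
    (hkc j u hu x).comp (f := fun x => (u, x)) (by fun_prop)
  let p : ↥(K ×ˢ S) := ⟨(x, y), hx, hy⟩
  have hval : ∀ t ∈ Icc (0 : ℝ) 1, G t ⟨j, by omega⟩ p = ((t ^ j * ‖t • x - y‖⁻¹ : ℝ) : ℂ) := by
    intro t ht
    change ContinuousMap.mkD (k j t) 0 p = _
    rw [ContinuousMap.mkD_apply_of_continuous (hcont _ (hseg ⟨t, ht, rfl⟩))]
    change (t : ℂ) ^ j * qd t (x, y) ^ (-(1 / 2) : ℂ) = _
    rw [qd_cpow t (x, y) (hne p t ht)]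
    push_cast
    rfl
  rw [dist_eq_norm] at hdist
  have h1 := (norm_le_pi_norm _ (⟨j, by omega⟩ : Fin (n + 1))).trans hdist.le
  have h2 := (ContinuousMap.norm_coe_le_norm _ p).trans h1
  have h3 := (Complex.abs_re_le_norm _).trans h2
  rw [Pi.sub_apply, ContinuousMap.sub_apply, Finsupp.linearCombination_apply, Finsupp.sum,
    Finset.sum_apply, ContinuousMap.sum_apply] at h3
  have h4 := hval 1 (by simp)
  rw [Complex.ofReal_one] at h4
  rw [h4, Complex.sub_re, Complex.ofReal_re, Complex.re_sum] at h3
  refine le_of_eq_of_le (congrArg _ (congrArg₂ _ (by simp) (Finset.sum_congr rfl fun r hr => ?_))) h3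
  have h5 : (l r • G r) ⟨j, by omega⟩ p = l r * G r ⟨j, by omega⟩ p := rfl
  have hr' := hl hr
  rw [h5, hval r ⟨hr'.1.le, hr'.2.le.trans hρ1⟩, Complex.re_mul_ofReal]
  ring

/-! ### Pushing sources outwards -/

/-- The (unnormalised) Newtonian potential `x ↦ ∫ ‖x - y‖⁻¹ g(y) dy`. -/
noncomputable abbrev nconv {G : Type} [NormedAddCommGroup G] [NormedSpace ℝ G] (g : E3 → G) :
    E3 → G := kconv (fun y => ‖y‖⁻¹) g

lemma integrable_nconv {G : Type} [NormedAddCommGroup G] [NormedSpace ℝ G] {g : E3 → G}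
    (hg : Continuous g) (hgs : HasCompactSupport g) (x : E3) :
    Integrable (fun y => ‖x - y‖⁻¹ • g y) := by
  have h := (integrable_kconv locInt_inv_norm hg hgs x).comp_sub_left x
  simpa using h

/-- Kernel bounds control all derivatives of a difference of dilated Newtonian potentials: a
derivative of `x ↦ nconv g (r • x)` costs a factor `r` and replaces `g` by its derivative. -/
lemma approx_error {K S : Set E3} {T : Finset ℝ} {ε : ℝ} (j : ℕ) :
    ∀ {G : Type} [NormedAddCommGroup G] [NormedSpace ℝ G] {g : E3 → G} {c : ℝ → ℝ},
    ContDiff ℝ ∞ g → HasCompactSupport g → tsupport g ⊆ S →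
    (∀ i ≤ j, ∀ x ∈ K, ∀ y ∈ S,
        |‖x - y‖⁻¹ - ∑ r ∈ T, c r * r ^ i * ‖r • x - y‖⁻¹| ≤ ε) →
    ∀ x ∈ K, ‖iteratedFDeriv ℝ j (fun x => nconv g x - ∑ r ∈ T, c r • nconv g (r • x)) x‖ ≤
      ε * ∫ y, ‖iteratedFDeriv ℝ j g y‖ := by
  induction j with
  | zero =>
    intro G _ _ g c hg hgs hS h x hx
    simp only [norm_iteratedFDeriv_zero]
    have hi := integrable_nconv hg.continuous hgs
    have h1 : nconv g x - ∑ r ∈ T, c r • nconv g (r • x) =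
        ∫ y, (‖x - y‖⁻¹ - ∑ r ∈ T, c r * ‖r • x - y‖⁻¹) • g y := by
      simp only [nconv, kconv_swap, ← integral_smul]
      have hi' : ∀ r ∈ T, Integrable fun y => c r • ‖r • x - y‖⁻¹ • g y :=
        fun r _ => (hi (r • x)).smul (c r)
      rw [← integral_finsetSum _ hi', ← integral_sub (hi x) (integrable_finsetSum _ hi')]
      simp only [sub_smul, Finset.sum_smul, smul_smul]
    rw [h1, ← integral_const_mul]
    refine norm_integral_le_of_norm_le
      ((hg.continuous.norm.integrable_of_hasCompactSupport hgs.norm).const_mul ε)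
      (Eventually.of_forall fun y => ?_)
    rw [norm_smul, Real.norm_eq_abs]
    by_cases hy : y ∈ tsupport g
    · have := h 0 le_rfl x hx y (hS hy)
      simp only [pow_zero, mul_one] at this
      gcongr
    · simp [image_eq_zero_of_notMem_tsupport hy]
  | succ j ih =>
    intro G _ _ g c hg hgs hS h x hx
    have hd : fderiv ℝ (fun x => nconv g x - ∑ r ∈ T, c r • nconv g (r • x)) =
        fun x => nconv (fderiv ℝ g) x - ∑ r ∈ T, (c r * r) • nconv (fderiv ℝ g) (r • x) := by
      ext1 x
      have h1 : ∀ r : ℝ, HasFDerivAt (fun x => c r • nconv g (r • x))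
          ((c r * r) • nconv (fderiv ℝ g) (r • x)) x := by
        intro r
        have h2 : HasFDerivAt (fun x : E3 => r • x) (r • ContinuousLinearMap.id ℝ E3) x :=
          (hasFDerivAt_id x).const_smul r
        have h3 := ((hasFDerivAt_kconv locInt_inv_norm hg hgs (r • x)).comp x h2).const_smul (c r)
        rw [ContinuousLinearMap.comp_smul, ContinuousLinearMap.comp_id, smul_smul] at h3
        exact h3
      exact ((hasFDerivAt_kconv locInt_inv_norm hg hgs x).sub
        (HasFDerivAt.fun_sum fun r _ => h1 r)).fderiv
    rw [← norm_iteratedFDeriv_fderiv, hd]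
    simp only [← norm_iteratedFDeriv_fderiv (𝕜 := ℝ) (f := g)]
    refine ih (c := fun r => c r * r) (fderiv_smooth hg) (hgs.fderiv (𝕜 := ℝ))
      ((tsupport_fderiv_subset ℝ).trans hS) (fun i hi x hx y hy => ?_) x hx
    have := h (i + 1) (by omega) x hx y hy
    simpa only [pow_succ', mul_assoc] using this

lemma hasCompactSupport_finsetSum (f : ℝ → E3 → ℝ) (T : Finset ℝ)
    (h : ∀ r ∈ T, HasCompactSupport (f r)) : HasCompactSupport (fun x => ∑ r ∈ T, f r x) := by
  induction T using Finset.induction_on with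
  | empty =>
    simp only [Finset.sum_empty]
    exact HasCompactSupport.zero
  | insert r T hr ih =>
    simp only [Finset.sum_insert hr]
    exact (h r (by simp)).add (ih fun s hs => h s (by simp [hs]))

/-- Sources outside a compact set starlike about `0` can be pushed out of any given ball, changing
the potential on the compact set as little as desired. -/
lemma push_out {K : Set E3} (hK : IsCompact K) (h0 : (0 : E3) ∈ K)
    (hst : ∀ x ∈ K, ∀ t ∈ Icc (0 : ℝ) 1, t • x ∈ K) {g : E3 → ℝ} (hg : ContDiff ℝ ∞ g)
    (hgs : HasCompactSupport g) (hd : Disjoint K (tsupport g)) (R : ℝ) (k : ℕ) {ε : ℝ}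
    (hε : 0 < ε) :
    ∃ g' : E3 → ℝ, ContDiff ℝ ∞ g' ∧ HasCompactSupport g' ∧ (∀ x, ‖x‖ < R → g' x = 0) ∧
      ∀ j ≤ k, ∀ x ∈ K, ‖iteratedFDeriv ℝ j (nconv (fun x => g x - g' x)) x‖ ≤ ε := by
  obtain ⟨δ, hδ, hb⟩ := Metric.isOpen_iff.1 (isClosed_tsupport g).isOpen_compl 0
    (disjoint_left.1 hd h0)
  have hgz : ∀ x, ‖x‖ < δ → g x = 0 := fun x hx =>
    image_eq_zero_of_notMem_tsupport (hb (by simpa using hx))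
  have hR : 0 < max R 1 := by positivity
  set M : ℝ := 1 + ∑ j ∈ Finset.range (k + 1), ∫ y, ‖iteratedFDeriv ℝ j g y‖ with hM
  have hnn : ∀ j, 0 ≤ ∫ y, ‖iteratedFDeriv ℝ j g y‖ := fun j =>
    integral_nonneg fun y => norm_nonneg _
  have hM0 : 0 < M := by
    have := Finset.sum_nonneg fun j (_ : j ∈ Finset.range (k + 1)) => hnn j
    linarith
  obtain ⟨T, c, hT, hc⟩ := kernel_approx hK hgs hst hd (ρ := min 1 (δ / max R 1)) (by positivity)
    (min_le_left _ _) k (div_pos hε hM0)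
  have hsm : ∀ r : ℝ, ContDiff ℝ ∞ (fun x => r ^ 2 * g (r • x)) := fun r =>
    contDiff_const.mul (hg.comp (contDiff_const_smul r))
  have hcs : ∀ r ∈ T, HasCompactSupport (fun x => r ^ 2 * g (r • x)) := fun r hr =>
    (hgs.comp_smul (hT r hr).1.ne').mul_left
  have hsm' : ∀ r, ContDiff ℝ ∞ (fun x => c r * (r ^ 2 * g (r • x))) := fun r =>
    contDiff_const.mul (hsm r)
  have hcs' : ∀ r ∈ T, HasCompactSupport (fun x => c r * (r ^ 2 * g (r • x))) := fun r hr =>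
    (hcs r hr).mul_left
  -- `r ^ 2 * g (r • x)` is the source whose potential is the potential of `g` dilated by `r`
  refine ⟨fun x => ∑ r ∈ T, c r * (r ^ 2 * g (r • x)), ContDiff.sum fun r _ => hsm' r,
    ?_, fun x hx => Finset.sum_eq_zero fun r hr => ?_, fun j hj x hx => ?_⟩
  · exact hasCompactSupport_finsetSum _ T hcs'
  · have h1 := (hT r hr).2.trans_le (min_le_right _ _)
    rw [lt_div_iff₀ hR] at h1
    rw [hgz, mul_zero, mul_zero]
    rw [norm_smul, Real.norm_eq_abs, abs_of_pos (hT r hr).1]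
    have := (hT r hr).1
    nlinarith [le_max_left R 1]
  · have h1 : nconv (fun x => g x - ∑ r ∈ T, c r * (r ^ 2 * g (r • x))) =
        fun x => nconv g x - ∑ r ∈ T, c r • nconv g (r • x) := by
      ext x
      have hi := integrable_kconv locInt_inv_norm hg.continuous hgs x
      have hi' : ∀ r ∈ T, Integrable fun y =>
          ‖y‖⁻¹ • (c r * (r ^ 2 * g (r • (x - y)))) := fun r hr =>
        integrable_kconv locInt_inv_norm (hsm' r).continuous (hcs' r hr) x
      rw [nconv, kconv]
      have h2 : ∀ y, ‖y‖⁻¹ • (g (x - y) - ∑ r ∈ T, c r * (r ^ 2 * g (r • (x - y)))) =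
          ‖y‖⁻¹ • g (x - y) - ∑ r ∈ T, ‖y‖⁻¹ • (c r * (r ^ 2 * g (r • (x - y)))) := fun y => by
        rw [smul_sub, Finset.smul_sum]
      simp only [h2]
      rw [integral_sub hi (integrable_finsetSum _ hi'), integral_finsetSum _ hi']
      refine congrArg _ (Finset.sum_congr rfl fun r hr => ?_)
      rw [nconv, nconv_scale g (hT r hr).1, kconv, ← integral_smul]
      refine integral_congr_ae (Eventually.of_forall fun y => ?_)
      simp only [smul_eq_mul]
      ring
    rw [h1]
    refine (approx_error j hg hgs subset_rfl (fun i hi => hc i (hi.trans hj)) x hx).trans ?_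
    have h2 : ∫ y, ‖iteratedFDeriv ℝ j g y‖ ≤ M := by
      have := Finset.single_le_sum (fun j _ => hnn j) (Finset.mem_range.2 (Nat.lt_succ_of_le hj))
      linarith
    calc ε / M * ∫ y, ‖iteratedFDeriv ℝ j g y‖ ≤ ε / M * M := by gcongr
      _ = ε := by field_simp

/-! ### Smooth series, exhaustions and the Poisson equation on starlike sets -/

/-- All derivatives of `e n` are bounded on `V` by summable sequences. -/
def SummableBounds {G : Type} [NormedAddCommGroup G] [NormedSpace ℝ G] (V : Set E3)
    (e : ℕ → E3 → G) : Prop :=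
  ∀ j : ℕ, ∃ u : ℕ → ℝ, Summable u ∧ ∀ n, ∀ x ∈ V, ‖iteratedFDeriv ℝ j (e n) x‖ ≤ u n

section series

variable {G : Type} [NormedAddCommGroup G] [NormedSpace ℝ G]

lemma SummableBounds.fderiv {V : Set E3} {e : ℕ → E3 → G} (h : SummableBounds V e) :
    SummableBounds V (fun n => fderiv ℝ (e n)) := fun j => by
  obtain ⟨u, hu, hb⟩ := h (j + 1)
  exact ⟨u, hu, fun n x hx => by rw [norm_iteratedFDeriv_fderiv]; exact hb n x hx⟩

lemma SummableBounds.summable [CompleteSpace G] {V : Set E3} {e : ℕ → E3 → G}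
    (h : SummableBounds V e) {x : E3} (hx : x ∈ V) : Summable (fun n => e n x) := by
  obtain ⟨u, hu, hb⟩ := h 0
  exact Summable.of_norm_bounded hu fun n => by simpa using hb n x hx

lemma SummableBounds.hasFDerivAt [CompleteSpace G] {V : Set E3} (hV : IsOpen V)
    (hVc : IsPreconnected V) {e : ℕ → E3 → G} (he : ∀ n, ContDiff ℝ ∞ (e n))
    (h : SummableBounds V e) {x : E3} (hx : x ∈ V) :
    HasFDerivAt (fun y => ∑' n, e n y) (∑' n, _root_.fderiv ℝ (e n) x) x := by
  obtain ⟨u, hu, hb⟩ := h.fderiv 0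
  refine hasFDerivAt_tsum_of_isPreconnected hu hV hVc (fun n y _ => ?_)
    (fun n y hy => by simpa using hb n y hy) hx (h.summable hx) hx
  exact ((he n).differentiable (by simp) y).hasFDerivAt

lemma SummableBounds.contDiffOn_nat {V : Set E3} (hV : IsOpen V) (hVc : IsPreconnected V)
    (m : ℕ) : ∀ {G : Type} [NormedAddCommGroup G] [NormedSpace ℝ G] [CompleteSpace G]
    {e : ℕ → E3 → G}, (∀ n, ContDiff ℝ ∞ (e n)) → SummableBounds V e →
    ContDiffOn ℝ m (fun y => ∑' n, e n y) V := by
  induction m with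
  | zero =>
    intro G _ _ _ e he h
    obtain ⟨u, hu, hb⟩ := h 0
    refine contDiffOn_zero.2 (continuousOn_tsum (fun n => (he n).continuous.continuousOn) hu
      fun n y hy => by simpa using hb n y hy)
  | succ m ih =>
    intro G _ _ _ e he h
    have hd := fun x hx => h.hasFDerivAt hV hVc he (x := x) hx
    rw [Nat.cast_succ, contDiffOn_succ_iff_fderiv_of_isOpen hV]
    refine ⟨fun x hx => (hd x hx).differentiableAt.differentiableWithinAt, by simp, ?_⟩
    exact (ih (fun n => fderiv_smooth (he n)) h.fderiv).congr fun x hx => (hd x hx).fderiv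

lemma SummableBounds.contDiffOn [CompleteSpace G] {V : Set E3} (hV : IsOpen V)
    (hVc : IsPreconnected V) {e : ℕ → E3 → G} (he : ∀ n, ContDiff ℝ ∞ (e n))
    (h : SummableBounds V e) : ContDiffOn ℝ ∞ (fun y => ∑' n, e n y) V :=
  contDiffOn_infty.2 fun m => h.contDiffOn_nat hV hVc m he

lemma SummableBounds.pd3 {V : Set E3} {e : ℕ → E3 → ℝ} (he : ∀ n, ContDiff ℝ ∞ (e n))
    (h : SummableBounds V e) (i : Fin 3) : SummableBounds V (fun n => pd3 (e n) i) := fun j => by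
  obtain ⟨u, hu, hb⟩ := h.fderiv j
  refine ⟨u, hu, fun n x hx => ?_⟩
  have h1 := norm_iteratedFDeriv_clm_apply_const (c := EuclideanSpace.single i (1 : ℝ)) (n := j)
    (N := ∞) (fderiv_smooth (he n)).contDiffAt (x := x) (by exact_mod_cast le_top)
  refine (h1.trans ?_).trans (hb n x hx)
  simp

lemma SummableBounds.pd3_tsum {V : Set E3} (hV : IsOpen V) (hVc : IsPreconnected V)
    {e : ℕ → E3 → ℝ} (he : ∀ n, ContDiff ℝ ∞ (e n)) (h : SummableBounds V e) (i : Fin 3) {x : E3}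
    (hx : x ∈ V) : _root_.pd3 (fun y => ∑' n, e n y) i x = ∑' n, _root_.pd3 (e n) i x := by
  unfold _root_.pd3 pd
  rw [(h.hasFDerivAt hV hVc he hx).fderiv]
  exact (ContinuousLinearMap.apply ℝ ℝ (EuclideanSpace.single i (1 : ℝ))).map_tsum
    (h.fderiv.summable hx)

lemma pd3_congr {φ ψ : E3 → ℝ} {V : Set E3} (hV : IsOpen V) (h : ∀ x ∈ V, φ x = ψ x) (i : Fin 3)
    {x : E3} (hx : x ∈ V) : pd3 φ i x = pd3 ψ i x := by
  unfold pd3 pd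
  rw [(eventuallyEq_of_mem (hV.mem_nhds hx) h : φ =ᶠ[𝓝 x] ψ).fderiv_eq]

lemma lap3_congr {φ ψ : E3 → ℝ} {V : Set E3} (hV : IsOpen V) (h : ∀ x ∈ V, φ x = ψ x)
    {x : E3} (hx : x ∈ V) : lap3 φ x = lap3 ψ x :=
  Finset.sum_congr rfl fun i _ => pd3_congr hV (fun _ hy => pd3_congr hV h i hy) i hx

lemma SummableBounds.lap3_tsum {V : Set E3} (hV : IsOpen V) (hVc : IsPreconnected V)
    {e : ℕ → E3 → ℝ} (he : ∀ n, ContDiff ℝ ∞ (e n)) (h : SummableBounds V e) {x : E3}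
    (hx : x ∈ V) : lap3 (fun y => ∑' n, e n y) x = ∑' n, lap3 (e n) x := by
  have hs : ∀ i, Summable fun n => _root_.pd3 (_root_.pd3 (e n) i) i x := fun i =>
    ((h.pd3 he i).pd3 (fun n => pd3_smooth (he n) i) i).summable hx
  unfold lap3
  rw [Summable.tsum_finsetSum fun i _ => hs i]
  refine Finset.sum_congr rfl fun i _ => ?_
  rw [pd3_congr hV (fun y hy => h.pd3_tsum hV hVc he i hy) i hx]
  exact (h.pd3 he i).pd3_tsum hV hVc (fun n => pd3_smooth (he n) i) i hx

end series

/-- An open set starlike about `0` is exhausted by compact sets starlike about `0`. -/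
lemma exists_exhaustion {U : Set E3} (hU : IsOpen U) (h0 : (0 : E3) ∈ U)
    (hst : StarConvex ℝ 0 U) : ∃ L : ℕ → Set E3, (∀ n, IsCompact (L n)) ∧ (∀ n, L n ⊆ U) ∧
      Monotone L ∧ (∀ n, (0 : E3) ∈ L n) ∧
      (∀ n, ∀ x ∈ L n, ∀ t ∈ Icc (0 : ℝ) 1, t • x ∈ L n) ∧ ∀ x ∈ U, ∃ m, L m ∈ 𝓝 x := by
  have := hU.locallyCompactSpace
  let K := CompactExhaustion.choice U
  let C : ℕ → Set E3 := fun n => insert 0 (Subtype.val '' K n)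
  have hC : ∀ n, IsCompact (C n) := fun n =>
    ((K.isCompact n).image continuous_subtype_val).insert 0
  have hCU : ∀ n, C n ⊆ U := by
    rintro n x (rfl | ⟨y, -, rfl⟩)
    · exact h0
    · exact y.2
  have hsub : ∀ n, C n ⊆ (fun p : ℝ × E3 => p.1 • p.2) '' (Icc 0 1 ×ˢ C n) := fun n x hx =>
    ⟨(1, x), ⟨by simp, hx⟩, by simp⟩
  refine ⟨fun n => (fun p : ℝ × E3 => p.1 • p.2) '' (Icc 0 1 ×ˢ C n), fun n => ?_, ?_, ?_,
    fun n => hsub n (mem_insert _ _), ?_, fun x hx => ?_⟩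
  · exact (isCompact_Icc.prod (hC n)).image (by fun_prop)
  · rintro n _ ⟨⟨t, x⟩, ⟨ht, hx⟩, rfl⟩
    exact hst.smul_mem (hCU n hx) ht.1 ht.2
  · intro m n hmn
    exact image_mono (prod_mono le_rfl (insert_subset_insert (image_mono (K.subset hmn))))
  · rintro n _ ⟨⟨t, x⟩, ⟨ht, hx⟩, rfl⟩ s hs
    exact ⟨(s * t, x), ⟨⟨mul_nonneg hs.1 ht.1, mul_le_one₀ hs.2 ht.1 ht.2⟩, hx⟩, mul_smul _ _ _⟩
  · obtain ⟨n, hn⟩ := K.exists_mem ⟨x, hx⟩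
    refine ⟨n + 1, mem_of_superset ?_ (hsub (n + 1))⟩
    have h1 := hU.isOpenMap_subtype_val.image_mem_nhds
      (mem_interior_iff_mem_nhds.1 (K.subset_interior_succ n hn))
    exact mem_of_superset h1 (subset_insert _ _)

/-- A smooth function on an open set agrees near a given compact subset with a smooth compactly
supported function on the whole space. -/
lemma exists_cutoff {G : Type} [NormedAddCommGroup G] [NormedSpace ℝ G] {U K : Set E3}
    (hU : IsOpen U) (hK : IsCompact K) (hKU : K ⊆ U) {f : E3 → G} (hf : ContDiffOn ℝ ∞ f U) :
    ∃ h : E3 → G, ContDiff ℝ ∞ h ∧ HasCompactSupport h ∧ ∀ᶠ x in 𝓝ˢ K, h x = f x := by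
  obtain ⟨t, ht, hKt, htU⟩ := exists_compact_between hK hU hKU
  obtain ⟨χ, h1, h0, -⟩ := exists_contMDiffMap_one_nhds_of_subset_interior (n := ⊤)
    (modelWithCornersSelf ℝ E3) hK.isClosed hKt
  have hsupp : tsupport (fun x => χ x • f x) ⊆ t := by
    refine closure_minimal (fun x hx => ?_) ht.isClosed
    by_contra hxt
    exact hx (by simp [h0 x hxt])
  refine ⟨fun x => χ x • f x, contDiff_iff_contDiffAt.2 fun x => ?_,
    ht.of_isClosed_subset (isClosed_tsupport _) hsupp, h1.mono fun x hx => by simp [hx]⟩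
  by_cases hx : x ∈ tsupport (fun x => χ x • f x)
  · exact χ.contMDiff.contDiff.contDiffAt.smul
      (hf.contDiffAt (hU.mem_nhds (htU (hsupp hx))))
  · exact contDiffAt_const.congr_of_eventuallyEq (notMem_tsupport_iff_eventuallyEq.1 hx)

lemma pd3_contDiffOn {U : Set E3} (hU : IsOpen U) {f : E3 → ℝ} (hf : ContDiffOn ℝ ∞ f U)
    (i : Fin 3) : ContDiffOn ℝ ∞ (pd3 f i) U :=
  (hf.fderiv_of_isOpen hU (m := ∞) (by simp)).clm_apply contDiffOn_const

lemma differentiableAt_of_smoothOn {G : Type} [NormedAddCommGroup G] [NormedSpace ℝ G]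
    {U : Set E3} (hU : IsOpen U) {f : E3 → G} (hf : ContDiffOn ℝ ∞ f U) {x : E3} (hx : x ∈ U) :
    DifferentiableAt ℝ f x :=
  (hf.contDiffAt (hU.mem_nhds hx)).differentiableAt (by simp)

lemma pd3_mul_add {φ ψ : E3 → ℝ} {x : E3} (h1 : DifferentiableAt ℝ φ x)
    (h2 : DifferentiableAt ℝ ψ x) (a : ℝ) (i : Fin 3) :
    pd3 (fun y => a * (φ y + ψ y)) i x = a * (pd3 φ i x + pd3 ψ i x) := by
  have h := ((h1.hasFDerivAt.fun_add h2.hasFDerivAt).const_mul a).fderiv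
  unfold pd3 pd
  rw [h]
  rfl

lemma lap3_mul_add {U : Set E3} (hU : IsOpen U) {φ ψ : E3 → ℝ} (h1 : ContDiffOn ℝ ∞ φ U)
    (h2 : ContDiffOn ℝ ∞ ψ U) (a : ℝ) {x : E3} (hx : x ∈ U) :
    lap3 (fun y => a * (φ y + ψ y)) x = a * (lap3 φ x + lap3 ψ x) := by
  unfold lap3
  rw [← Finset.sum_add_distrib, Finset.mul_sum]
  refine Finset.sum_congr rfl fun i _ => ?_
  rw [pd3_congr hU (fun y hy => pd3_mul_add (differentiableAt_of_smoothOn hU h1 hy)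
    (differentiableAt_of_smoothOn hU h2 hy) a i) i hx]
  exact pd3_mul_add (differentiableAt_of_smoothOn hU (pd3_contDiffOn hU h1 i) hx)
    (differentiableAt_of_smoothOn hU (pd3_contDiffOn hU h2 i) hx) a i

/-- Solvability of the Poisson equation on starlike open sets, for arbitrary smooth right-hand
side. The potential is a Mittag-Leffler sum of Newtonian potentials of compactly supported
sources; the sources are moved outwards so that the sum converges. -/
lemma exists_lap3_eq {U : Set E3} (hU : IsOpen U) (h0 : (0 : E3) ∈ U)
    (hst : StarConvex ℝ 0 U) {f : E3 → ℝ} (hf : ContDiffOn ℝ ∞ f U) :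
    ∃ φ : E3 → ℝ, ContDiffOn ℝ ∞ φ U ∧ ∀ x ∈ U, lap3 φ x = f x := by
  obtain ⟨L, hLc, hLU, hLm, hL0, hLst, hLn⟩ := exists_exhaustion hU h0 hst
  let P : ℕ → (E3 → ℝ) → Prop := fun n g =>
    ContDiff ℝ ∞ g ∧ HasCompactSupport g ∧ ∀ᶠ x in 𝓝ˢ (L n), g x = f x
  have step : ∀ n g, P n g → ∃ g₁, P (n + 1) g₁ ∧ ∀ j ≤ n, ∀ x ∈ L n,
      ‖iteratedFDeriv ℝ j (nconv (fun x => g₁ x - g x)) x‖ ≤ (1 / 2) ^ n := by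
    rintro n g ⟨hg, hgs, hgf⟩
    obtain ⟨h, hh, hhs, hhf⟩ := exists_cutoff hU (hLc (n + 1)) (hLU (n + 1)) hf
    have hd : Disjoint (L n) (tsupport fun x => h x - g x) := by
      rw [disjoint_left]
      intro x hx
      rw [notMem_tsupport_iff_eventuallyEq]
      filter_upwards [hgf.filter_mono (nhds_le_nhdsSet hx),
        hhf.filter_mono (nhds_le_nhdsSet (hLm n.le_succ hx))] with y h1 h2
      simp [h1, h2]
    obtain ⟨R, hR⟩ := (hLc (n + 1)).isBounded.subset_ball 0
    obtain ⟨q, hq, hqs, hq0, hqb⟩ := push_out (hLc n) (hL0 n) (hLst n) (hh.sub hg) (hhs.sub hgs) hd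
      R n (ε := (1 / 2) ^ n) (by positivity)
    refine ⟨fun x => h x - q x, ⟨hh.sub hq, hhs.sub hqs, ?_⟩, fun j hj x hx => ?_⟩
    · filter_upwards [hhf, Metric.isOpen_ball.mem_nhdsSet.2 hR] with x h1 h2
      rw [h1, hq0 x (by simpa using h2), sub_zero]
    · have := hqb j hj x hx
      simpa only [sub_right_comm] using this
  obtain ⟨g₀, hg₀⟩ : ∃ g, P 0 g := exists_cutoff hU (hLc 0) (hLU 0) hf
  choose! nxt hnxt hnb using step
  let g : ℕ → E3 → ℝ := fun n => Nat.rec g₀ (fun n g => nxt n g) n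
  have hP : ∀ n, P n (g n) := fun n => by
    induction n with
    | zero => exact hg₀
    | succ n ih => exact hnxt n _ ih
  let e : ℕ → E3 → ℝ := fun n => nconv (fun x => g (n + 1) x - g n x)
  have hds : ∀ n, ContDiff ℝ ∞ (fun x => g (n + 1) x - g n x) := fun n =>
    (hP (n + 1)).1.sub (hP n).1
  have hdc : ∀ n, HasCompactSupport (fun x => g (n + 1) x - g n x) := fun n =>
    (hP (n + 1)).2.1.sub (hP n).2.1
  have he : ∀ n, ContDiff ℝ ∞ (e n) := fun n => contDiff_kconv locInt_inv_norm (hds n) (hdc n)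
  have heb : ∀ n, ∀ j ≤ n, ∀ x ∈ L n, ‖iteratedFDeriv ℝ j (e n) x‖ ≤ (1 / 2) ^ n := fun n =>
    hnb n (g n) (hP n)
  -- on `L m`, the bound `(1 / 2) ^ n` on `j` derivatives is only available for `n ≥ max m j`
  have hsb : ∀ m, SummableBounds (L m) e := by
    intro m j
    have hbd : ∀ n, ∃ C, ∀ x ∈ L m, ‖iteratedFDeriv ℝ j (e n) x‖ ≤ C := fun n =>
      (hLc m).exists_bound_of_continuousOn
        ((he n).continuous_iteratedFDeriv (by exact_mod_cast le_top)).continuousOn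
    choose C hC using hbd
    refine ⟨fun n => if n < max m j then C n else (1 / 2) ^ n, ?_, fun n x hx => ?_⟩
    · refine (summable_geometric_two).congr_atTop ?_
      filter_upwards [eventually_ge_atTop (max m j)] with n hn
      simp only [not_lt.2 hn, if_false]
    · dsimp only
      split_ifs with h
      · exact hC n x hx
      · rw [not_lt, max_le_iff] at h
        exact heb n j h.2 x (hLm h.1 hx)
  have hn0 : ContDiff ℝ ∞ (nconv (g 0)) := contDiff_kconv locInt_inv_norm (hP 0).1 (hP 0).2.1
  have key : ∀ x ∈ U, ContDiffAt ℝ ∞ (fun y => ∑' n, e n y) x ∧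
      lap3 (fun y => ∑' n, e n y) x = -c0 * (f x - g 0 x) := by
    intro x hx
    obtain ⟨m, hm⟩ := hLn x hx
    obtain ⟨δ, hδ, hb⟩ := Metric.mem_nhds_iff.1 hm
    have hs : SummableBounds (Metric.ball x δ) e := fun j => by
      obtain ⟨u, hu, hb'⟩ := hsb m j
      exact ⟨u, hu, fun n y hy => hb' n y (hb hy)⟩
    have hpc := (convex_ball x δ).isPreconnected
    have hxm := Metric.mem_ball_self (x := x) hδ
    refine ⟨(hs.contDiffOn Metric.isOpen_ball hpc he).contDiffAt
      (Metric.isOpen_ball.mem_nhds hxm), ?_⟩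
    rw [hs.lap3_tsum Metric.isOpen_ball hpc he hxm]
    have hgx : ∀ n ≥ m, g n x = f x := fun n hn =>
      ((hP n).2.2.filter_mono (nhds_le_nhdsSet (hLm hn (hb hxm)))).self_of_nhds
    -- the telescoping sum is finite at `x`, since `g n x = f x` for `n ≥ m`
    simp only [e, lap3_nconv (hds _) (hdc _), tsum_mul_left]
    rw [tsum_eq_sum (s := Finset.range m) fun n hn => ?_,
      Finset.sum_range_sub (fun n => g n x), hgx m le_rfl]
    rw [Finset.mem_range, not_lt] at hn
    rw [hgx n hn, hgx (n + 1) (by omega), sub_self]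
  refine ⟨fun y => -(1 / c0) * (nconv (g 0) y + ∑' n, e n y), fun x hx => ?_, fun x hx => ?_⟩
  · exact (contDiffAt_const.mul (hn0.contDiffAt.add (key x hx).1)).contDiffWithinAt
  · rw [lap3_mul_add hU hn0.contDiffOn (fun x hx => (key x hx).1.contDiffWithinAt) _ hx,
      (key x hx).2, lap3_nconv (hP 0).1 (hP 0).2.1]
    have := c0_pos.ne'
    field_simp
    ring

/-! ### Radial averages -/

/-- The weighted radial average `x ↦ ∫₀¹ t ^ p G(t x) dt`. -/
noncomputable def ray {G : Type} [NormedAddCommGroup G] [NormedSpace ℝ G] (p : ℕ) (g : E3 → G)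
    (x : E3) : G := ∫ t in (0 : ℝ)..1, t ^ p • g (t • x)

/-- Differentiation under the integral sign raises the weight by one. -/
lemma hasFDerivAt_ray {G : Type} [NormedAddCommGroup G] [NormedSpace ℝ G] {p : ℕ} {g : E3 → G}
    (hg : ContDiff ℝ ∞ g) (x : E3) : HasFDerivAt (ray p g) (ray (p + 1) (fderiv ℝ g) x) x := by
  have hc := hg.continuous
  have hc' := (fderiv_smooth hg).continuous
  obtain ⟨C, hC⟩ := (isCompact_closedBall (0 : E3) (‖x‖ + 1)).exists_bound_of_continuousOn
    hc'.continuousOn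
  refine intervalIntegral.hasFDerivAt_integral_of_dominated_of_fderiv_le
    (F := fun x t => t ^ p • g (t • x)) (F' := fun x t => t ^ (p + 1) • fderiv ℝ g (t • x))
    (bound := fun _ => C) (Metric.ball_mem_nhds x one_pos) ?_ ?_ ?_ ?_ ?_ ?_
  · exact Eventually.of_forall fun y => Continuous.aestronglyMeasurable (by fun_prop)
  · exact Continuous.intervalIntegrable (by fun_prop) _ _
  · exact Continuous.aestronglyMeasurable (by fun_prop)
  · refine Eventually.of_forall fun t ht y hy => ?_
    rw [uIoc_of_le zero_le_one] at ht
    rw [norm_smul, Real.norm_eq_abs, abs_of_nonneg (pow_nonneg ht.1.le _)]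
    have h1 : ‖fderiv ℝ g (t • y)‖ ≤ C := by
      refine hC _ ?_
      rw [mem_closedBall_zero_iff, norm_smul, Real.norm_eq_abs, abs_of_pos ht.1]
      have h2 : ‖y‖ ≤ ‖x‖ + 1 := by
        have := norm_le_norm_add_norm_sub x y
        rw [Metric.mem_ball, dist_eq_norm] at hy
        rw [norm_sub_rev] at this
        linarith
      nlinarith [norm_nonneg y, ht.2]
    have h3 : t ^ (p + 1) ≤ 1 := pow_le_one₀ ht.1.le ht.2
    nlinarith [norm_nonneg (fderiv ℝ g (t • y)), pow_nonneg ht.1.le (p + 1)]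
  · exact intervalIntegrable_const
  · refine Eventually.of_forall fun t ht y hy => ?_
    have h2 : HasFDerivAt (fun y : E3 => t • y) (t • ContinuousLinearMap.id ℝ E3) y :=
      (hasFDerivAt_id y).const_smul t
    have h3 := ((hg.differentiable (by simp) (t • y)).hasFDerivAt.comp y h2).const_smul (t ^ p)
    rw [ContinuousLinearMap.comp_smul, ContinuousLinearMap.comp_id, smul_smul, ← pow_succ] at h3
    exact h3

lemma contDiff_ray {G : Type} [NormedAddCommGroup G] [NormedSpace ℝ G] {p : ℕ} {g : E3 → G}
    (hg : ContDiff ℝ ∞ g) : ContDiff ℝ ∞ (ray p g) := by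
  have key : ∀ m : ℕ, ∀ {G : Type} [NormedAddCommGroup G] [NormedSpace ℝ G] (p : ℕ) {g : E3 → G},
      ContDiff ℝ ∞ g → ContDiff ℝ m (ray p g) := by
    intro m
    induction m with
    | zero =>
      intro G _ _ p g hg
      exact contDiff_zero.2 (continuous_iff_continuousAt.2 fun x =>
        (hasFDerivAt_ray hg x).continuousAt)
    | succ m ih =>
      intro G _ _ p g hg
      rw [Nat.cast_succ, contDiff_succ_iff_fderiv]
      refine ⟨fun x => (hasFDerivAt_ray hg x).differentiableAt, by simp, ?_⟩
      rw [show fderiv ℝ (ray p g) = ray (p + 1) (fderiv ℝ g) from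
        funext fun x => (hasFDerivAt_ray hg x).fderiv]
      exact ih _ (fderiv_smooth hg)
  exact contDiff_infty.2 fun m => key m p hg

lemma pd3_ray {g : E3 → ℝ} (hg : ContDiff ℝ ∞ g) (p : ℕ) (i : Fin 3) (x : E3) :
    pd3 (ray p g) i x = ray (p + 1) (pd3 g i) x := by
  unfold pd3 pd
  rw [(hasFDerivAt_ray hg x).fderiv, ray, ray, ContinuousLinearMap.intervalIntegral_apply]
  · rfl
  · have := (fderiv_smooth hg).continuous
    exact Continuous.intervalIntegrable (by fun_prop) _ _

lemma fderiv_eq_sum (g : E3 → ℝ) (y x : E3) : fderiv ℝ g y x = ∑ i, x i * pd3 g i y := by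
  have hx : x = ∑ i, x i • EuclideanSpace.single i (1 : ℝ) := by
    ext j
    simp [Finset.sum_apply, Pi.single_apply]
  conv_lhs => rw [hx]
  rw [map_sum]
  simp only [map_smul, smul_eq_mul]
  rfl

/-- Euler's homotopy identity `2 I + x · ∇ I = g` for `I(x) = ∫₀¹ t g(t x) dt`, obtained by
integrating the derivative of `t ↦ t ^ 2 g(t x)`. -/
lemma ray_euler {g : E3 → ℝ} (hg : ContDiff ℝ ∞ g) (x : E3) :
    2 * ray 1 g x + ∑ i, x i * pd3 (ray 1 g) i x = g x := by
  have hc := hg.continuous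
  have hc' := (fderiv_smooth hg).continuous
  rw [← fderiv_eq_sum, (hasFDerivAt_ray hg x).fderiv, ray, ray,
    ContinuousLinearMap.intervalIntegral_apply, ← intervalIntegral.integral_const_mul,
    ← intervalIntegral.integral_add]
  · have hd : ∀ t ∈ uIcc (0 : ℝ) 1, HasDerivAt (fun t => t ^ 2 * g (t • x))
        (2 * (t ^ 1 • g (t • x)) + (t ^ (1 + 1) • fderiv ℝ g (t • x)) x) t := by
      intro t _
      have h1 : HasDerivAt (fun t : ℝ => t • x) x t := by
        simpa using (hasDerivAt_id t).smul_const x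
      have h2 := (hg.differentiable (by simp) (t • x)).hasFDerivAt.comp_hasDerivAt t h1
      have h3 := (hasDerivAt_pow 2 t).mul h2
      refine h3.congr_deriv ?_
      simp [mul_assoc]
    rw [intervalIntegral.integral_eq_sub_of_hasDerivAt hd]
    · simp
    · exact Continuous.intervalIntegrable (by fun_prop) _ _
  · exact Continuous.intervalIntegrable (by fun_prop) _ _
  · exact Continuous.intervalIntegrable (by fun_prop) _ _
  · exact Continuous.intervalIntegrable (by fun_prop) _ _

/-- On a starlike set the radial averages of a smooth function are locally those of a globally
smooth function. -/
lemma ray_local {U : Set E3} (hU : IsOpen U) (h0 : (0 : E3) ∈ U) (hst : StarConvex ℝ 0 U)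
    {f : E3 → ℝ} (hf : ContDiffOn ℝ ∞ f U) {x : E3} (hx : x ∈ U) :
    ∃ g : E3 → ℝ, ContDiff ℝ ∞ g ∧ (∀ t ∈ Icc (0 : ℝ) 1, ∀ᶠ y in 𝓝 (t • x), g y = f y) ∧
      ∀ p, ray p f =ᶠ[𝓝 x] ray p g := by
  obtain ⟨L, hLc, hLU, hLm, hL0, hLst, hLn⟩ := exists_exhaustion hU h0 hst
  obtain ⟨m, hm⟩ := hLn x hx
  obtain ⟨g, hg, -, hgf⟩ := exists_cutoff hU (hLc m) (hLU m) hf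
  refine ⟨g, hg, fun t ht => hgf.filter_mono
    (nhds_le_nhdsSet (hLst m x (mem_of_mem_nhds hm) t ht)), fun p => ?_⟩
  filter_upwards [hm] with y hy
  refine intervalIntegral.integral_congr fun t ht => ?_
  rw [uIcc_of_le zero_le_one] at ht
  have := (hgf.filter_mono (nhds_le_nhdsSet (hLst m y hy t ht))).self_of_nhds
  simp only [this]

lemma contDiffOn_ray {U : Set E3} (hU : IsOpen U) (h0 : (0 : E3) ∈ U) (hst : StarConvex ℝ 0 U)
    {f : E3 → ℝ} (hf : ContDiffOn ℝ ∞ f U) (p : ℕ) : ContDiffOn ℝ ∞ (ray p f) U := by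
  intro x hx
  obtain ⟨g, hg, -, hr⟩ := ray_local hU h0 hst hf hx
  exact ((contDiff_ray hg).contDiffAt.congr_of_eventuallyEq (hr p)).contDiffWithinAt

lemma ray_euler_on {U : Set E3} (hU : IsOpen U) (h0 : (0 : E3) ∈ U) (hst : StarConvex ℝ 0 U)
    {f : E3 → ℝ} (hf : ContDiffOn ℝ ∞ f U) {x : E3} (hx : x ∈ U) :
    2 * ray 1 f x + ∑ i, x i * pd3 (ray 1 f) i x = f x := by
  obtain ⟨g, hg, hgf, hr⟩ := ray_local hU h0 hst hf hx
  have h1 : f x = g x := by simpa using (hgf 1 (by simp)).self_of_nhds.symm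
  have h2 : ∀ i, pd3 (ray 1 f) i x = pd3 (ray 1 g) i x := fun i => by
    unfold pd3 pd
    rw [(hr 1).fderiv_eq]
  rw [h1, (hr 1).self_of_nhds]
  simp only [h2]
  exact ray_euler hg x

lemma pd3_ray_on {U : Set E3} (hU : IsOpen U) (h0 : (0 : E3) ∈ U) (hst : StarConvex ℝ 0 U)
    {f : E3 → ℝ} (hf : ContDiffOn ℝ ∞ f U) (i : Fin 3) {x : E3} (hx : x ∈ U) :
    IntervalIntegrable (fun t : ℝ => t ^ 2 * pd3 f i (t • x)) volume 0 1 ∧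
      pd3 (ray 1 f) i x = ∫ t in (0 : ℝ)..1, t ^ 2 * pd3 f i (t • x) := by
  obtain ⟨g, hg, hgf, hr⟩ := ray_local hU h0 hst hf hx
  have h1 : ∀ t ∈ uIcc (0 : ℝ) 1, t ^ 2 * pd3 g i (t • x) = t ^ 2 * pd3 f i (t • x) := by
    intro t ht
    rw [uIcc_of_le zero_le_one] at ht
    unfold pd3 pd
    have : g =ᶠ[𝓝 (t • x)] f := hgf t ht
    rw [this.fderiv_eq]
  have hc := (pd3_smooth hg i).continuous
  refine ⟨IntervalIntegrable.congr (fun t ht => h1 t (uIoc_subset_uIcc ht))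
    (Continuous.intervalIntegrable (by fun_prop) _ _), ?_⟩
  rw [← intervalIntegral.integral_congr h1]
  have h2 : pd3 (ray 1 f) i x = pd3 (ray 1 g) i x := by
    unfold pd3 pd
    rw [(hr 1).fderiv_eq]
  rw [h2, pd3_ray hg]
  rfl

/-! ### Vector potentials and the Coulomb gauge -/

lemma pd3_comm {U : Set E3} (hU : IsOpen U) {φ : E3 → ℝ} (hφ : ContDiffOn ℝ ∞ φ U) (i j : Fin 3)
    {x : E3} (hx : x ∈ U) : pd3 (pd3 φ i) j x = pd3 (pd3 φ j) i x := by
  have hd := differentiableAt_of_smoothOn hU (hφ.fderiv_of_isOpen hU (m := ∞) (by simp)) hx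
  have h : ∀ i j : Fin 3, pd3 (pd3 φ i) j x =
      fderiv ℝ (fderiv ℝ φ) x (EuclideanSpace.single j 1) (EuclideanSpace.single i 1) := by
    intro i j
    have h1 : HasFDerivAt (pd3 φ i) _ x := hd.hasFDerivAt.clm_apply
      (hasFDerivAt_const (EuclideanSpace.single i (1 : ℝ)) x)
    change fderiv ℝ (pd3 φ i) x _ = _
    rw [h1.fderiv]
    simp
  have hs := (hφ.contDiffAt (hU.mem_nhds hx)).isSymmSndFDerivAt
    (by rw [minSmoothness_of_isRCLikeNormedField]; exact WithTop.coe_le_coe.2 (le_top : (2 : ℕ∞) ≤ ⊤))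
  rw [h, h, hs.eq]

lemma pd3_add {φ ψ : E3 → ℝ} {x : E3} (h1 : DifferentiableAt ℝ φ x)
    (h2 : DifferentiableAt ℝ ψ x) (i : Fin 3) :
    pd3 (fun y => φ y + ψ y) i x = pd3 φ i x + pd3 ψ i x := by
  simpa using pd3_mul_add h1 h2 1 i

lemma pd3_cross {u v : E3 → ℝ} {x : E3} (hu : DifferentiableAt ℝ u x)
    (hv : DifferentiableAt ℝ v x) (k l i : Fin 3) :
    pd3 (fun y => u y * y k - v y * y l) i x =
      (pd3 u i x * x k + u x * (if k = i then 1 else 0)) -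
        (pd3 v i x * x l + v x * (if l = i then 1 else 0)) := by
  have hp : ∀ k : Fin 3, HasFDerivAt (fun y : E3 => y k)
      (EuclideanSpace.proj k : E3 →L[ℝ] ℝ) x := fun k =>
    (EuclideanSpace.proj k : E3 →L[ℝ] ℝ).hasFDerivAt
  have h : HasFDerivAt (fun y : E3 => u y * y k - v y * y l) _ x :=
    (hu.hasFDerivAt.mul (hp k)).sub (hv.hasFDerivAt.mul (hp l))
  unfold pd3 pd
  rw [h.fderiv]
  simp
  ring

lemma contDiffOn_coord {U : Set E3} {F : E3 → E3} (hF : ContDiffOn ℝ ∞ F U) (i : Fin 3) :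
    ContDiffOn ℝ ∞ (fun y => F y i) U :=
  (EuclideanSpace.proj i : E3 →L[ℝ] ℝ).contDiff.comp_contDiffOn hF

/-- Poincaré lemma for divergence-free fields on a set starlike about `0`: the field
`(∫₀¹ t F(t x) dt) × x` is a vector potential. -/
lemma exists_vector_potential {U : Set E3} (hU : IsOpen U) (h0 : (0 : E3) ∈ U)
    (hst : StarConvex ℝ 0 U) {F : E3 → E3} (hF : ContDiffOn ℝ ∞ F U)
    (hdiv : ∀ x ∈ U, div3 F x = 0) :
    ∃ A : E3 → E3, ContDiffOn ℝ ∞ A U ∧ ∀ x ∈ U, ∀ i : Fin 3, curl3 A x i = F x i := by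
  let I : Fin 3 → E3 → ℝ := fun i => ray 1 (fun y => F y i)
  have hI : ∀ i, ContDiffOn ℝ ∞ (I i) U := fun i =>
    contDiffOn_ray hU h0 hst (contDiffOn_coord hF i) 1
  have hc : ∀ i : Fin 3, ContDiffOn ℝ ∞ (fun y : E3 => y i) U := fun i =>
    contDiffOn_coord contDiffOn_id i
  have hcr : ∀ i j : Fin 3, ContDiffOn ℝ ∞ (fun y => I i y * y j - I j y * y i) U := fun i j =>
    ((hI i).mul (hc j)).sub ((hI j).mul (hc i))
  refine ⟨fun y => !₂[I 1 y * y 2 - I 2 y * y 1, I 2 y * y 0 - I 0 y * y 2,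
    I 0 y * y 1 - I 1 y * y 0], ?_, fun x hx => ?_⟩
  · refine contDiffOn_euclidean.2 fun i => ?_
    fin_cases i
    · exact hcr 1 2
    · exact hcr 2 0
    · exact hcr 0 1
  · have hd : ∀ i, DifferentiableAt ℝ (I i) x := fun i => differentiableAt_of_smoothOn hU (hI i) hx
    have hdv : ∑ i, pd3 (I i) i x = 0 := by
      have h1 := fun i => pd3_ray_on hU h0 hst (contDiffOn_coord hF i) i hx
      have h2 : ∑ i, pd3 (I i) i x =
          ∑ i : Fin 3, ∫ t in (0 : ℝ)..1, t ^ 2 * pd3 (fun y => F y i) i (t • x) :=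
        Finset.sum_congr rfl fun i _ => (h1 i).2
      have h4 : ∀ i ∈ (Finset.univ : Finset (Fin 3)), IntervalIntegrable
          (fun t : ℝ => t ^ 2 * pd3 (fun y => F y i) i (t • x)) volume 0 1 := fun i _ => (h1 i).1
      rw [h2, ← intervalIntegral.integral_finsetSum h4]
      refine (intervalIntegral.integral_congr (g := fun _ => (0 : ℝ)) fun t ht => ?_).trans
        (by simp)
      rw [uIcc_of_le zero_le_one] at ht
      have h3 := hdiv (t • x) (hst.smul_mem hx ht.1 ht.2)
      rw [div3] at h3
      simp only [← Finset.mul_sum, h3, mul_zero]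
    have he : ∀ i, 2 * I i x + ∑ k, x k * pd3 (I i) k x = F x i := fun i =>
      ray_euler_on hU h0 hst (contDiffOn_coord hF i) hx
    rw [Fin.sum_univ_three] at hdv
    simp only [Fin.sum_univ_three] at he
    intro i
    rw [← he i]
    fin_cases i
    · change pd3 (fun y => I 0 y * y 1 - I 1 y * y 0) 1 x -
        pd3 (fun y => I 2 y * y 0 - I 0 y * y 2) 2 x = _
      rw [pd3_cross (hd 0) (hd 1), pd3_cross (hd 2) (hd 0)]
      simp
      linear_combination (-x 0) * hdv
    · change pd3 (fun y => I 1 y * y 2 - I 2 y * y 1) 2 x -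
        pd3 (fun y => I 0 y * y 1 - I 1 y * y 0) 0 x = _
      rw [pd3_cross (hd 1) (hd 2), pd3_cross (hd 0) (hd 1)]
      simp
      linear_combination (-x 1) * hdv
    · change pd3 (fun y => I 2 y * y 0 - I 0 y * y 2) 0 x -
        pd3 (fun y => I 1 y * y 2 - I 2 y * y 1) 1 x = _
      rw [pd3_cross (hd 2) (hd 0), pd3_cross (hd 1) (hd 2)]
      simp
      linear_combination (-x 2) * hdv

/-- The theorem for sets starlike about `0`: a vector potential is corrected by a gradient. -/
lemma coulomb_centered {U : Set E3} (hU : IsOpen U) (h0 : (0 : E3) ∈ U)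
    (hst : StarConvex ℝ 0 U) {F : E3 → E3} (hF : ContDiffOn ℝ ∞ F U)
    (hdiv : ∀ x ∈ U, div3 F x = 0) :
    ∃ A : E3 → E3, ContDiffOn ℝ ∞ A U ∧ (∀ x ∈ U, ∀ i : Fin 3, curl3 A x i = F x i) ∧
      ∀ x ∈ U, div3 A x = 0 := by
  obtain ⟨A, hA, hcurl⟩ := exists_vector_potential hU h0 hst hF hdiv
  have hAi := fun i => contDiffOn_coord hA i
  have hdA : ContDiffOn ℝ ∞ (fun x => -div3 A x) U :=
    (ContDiffOn.sum fun i _ => pd3_contDiffOn hU (hAi i) i).neg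
  -- the gauge function solves `Δ φ = - div A`
  obtain ⟨φ, hφ, hlap⟩ := exists_lap3_eq hU h0 hst hdA
  have hφi := fun i => pd3_contDiffOn hU hφ i
  refine ⟨fun y => WithLp.toLp 2 fun i => A y i + pd3 φ i y,
    contDiffOn_euclidean.2 fun i => (hAi i).add (hφi i), fun x hx => ?_, fun x hx => ?_⟩
  · have hp : ∀ i j : Fin 3, pd3 (fun y => A y i + pd3 φ i y) j x =
        pd3 (fun y => A y i) j x + pd3 (pd3 φ i) j x := fun i j =>
      pd3_add (differentiableAt_of_smoothOn hU (hAi i) hx)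
        (differentiableAt_of_smoothOn hU (hφi i) hx) j
    have hs := fun i j => pd3_comm hU hφ i j hx
    intro i
    rw [← hcurl x hx i]
    unfold curl3
    simp only [hp]
    rw [hs 2 1, hs 0 2, hs 1 0]
    fin_cases i <;> simp
  · have h1 := hlap x hx
    have hp : ∀ i : Fin 3, pd3 (fun y => A y i + pd3 φ i y) i x =
        pd3 (fun y => A y i) i x + pd3 (pd3 φ i) i x := fun i =>
      pd3_add (differentiableAt_of_smoothOn hU (hAi i) hx)
        (differentiableAt_of_smoothOn hU (hφi i) hx) i
    rw [lap3, div3] at h1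
    simp only [div3, hp, Finset.sum_add_distrib]
    linarith

lemma pd3_comp_sub (h : E3 → ℝ) (c : E3) (i : Fin 3) (x : E3) :
    pd3 (fun y => h (y - c)) i x = pd3 h i (x - c) := by
  unfold pd3 pd
  rw [fderiv_comp_sub]

/-- **Strong dual Poincaré lemma in three dimensions.** On an open star-shaped subset `U`
of `ℝ³`, every smooth divergence-free vector field has a smooth Coulomb-gauge vector
potential: `curl A = F` and `div A = 0` on `U`. -/
theorem coulomb_gauge_vector_potential
    (U : Set (EuclideanSpace ℝ (Fin 3))) (hU : IsOpen U)
    (c : EuclideanSpace ℝ (Fin 3)) (hc : c ∈ U) (hstar : StarConvex ℝ c U)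
    (F : EuclideanSpace ℝ (Fin 3) → EuclideanSpace ℝ (Fin 3))
    (hF : ContDiffOn ℝ (⊤ : ℕ∞) F U)
    (hdiv : ∀ x ∈ U, div3 F x = 0) :
    ∃ A : EuclideanSpace ℝ (Fin 3) → EuclideanSpace ℝ (Fin 3), ContDiffOn ℝ (⊤ : ℕ∞) A U ∧
      (∀ x ∈ U, ∀ i : Fin 3, curl3 A x i = F x i) ∧
      (∀ x ∈ U, div3 A x = 0) := by
  have hst : StarConvex ℝ 0 ((fun x : E3 => x + c) ⁻¹' U) := by
    intro y hy a b ha hb hab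
    have h := hstar hy ha hb hab
    have he : a • c + b • (y + c) = a • (0 : E3) + b • y + c := by
      rw [eq_sub_of_add_eq hab]
      module
    rw [he] at h
    exact h
  have hdiv' : ∀ x ∈ (fun x : E3 => x + c) ⁻¹' U, div3 (fun y => F (y + c)) x = 0 := by
    intro x hx
    rw [← hdiv (x + c) hx]
    refine Finset.sum_congr rfl fun i _ => ?_
    have := pd3_comp_sub (fun y => F y i) (-c) i x
    simpa only [sub_neg_eq_add] using this
  obtain ⟨A, hA, hcurl, hdA⟩ := coulomb_centered (F := fun y => F (y + c))
    (hU.preimage (by fun_prop)) (by simpa using hc) hst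
    (hF.comp (contDiff_id.add contDiff_const).contDiffOn fun x hx => hx) hdiv'
  have hm : ∀ x ∈ U, x - c ∈ (fun x : E3 => x + c) ⁻¹' U := fun x hx => by simpa using hx
  have hp : ∀ (j i : Fin 3) (x : E3), pd3 (fun y => A (y - c) j) i x =
      pd3 (fun y => A y j) i (x - c) := fun j i x => pd3_comp_sub (fun y => A y j) c i x
  refine ⟨fun y => A (y - c), hA.comp (contDiff_id.sub contDiff_const).contDiffOn hm,
    fun x hx i => ?_, fun x hx => ?_⟩
  · have h := hcurl (x - c) (hm x hx) i
    simp only [sub_add_cancel] at h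
    rw [← h]
    simp only [curl3, hp]
  · rw [← hdA (x - c) (hm x hx)]
    simp only [div3, hp]
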